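/- arXiv:1308.3267 — 3 statements merged into one kernel-verified Lean document; each statement's English description precedes it below -/
import Mathlib

section
/- Let N be a positive integer; write N = σ²q with σ, q positive integers and q squarefree. Let ε be the greatest common divisor of all integers a − d where a, d are the diagonal entries of some matrix in Γ₀(N), and set v = gcd(σ, ε). Then a matrix g ∈ SL(2,ℝ) normalizes the subgroup ±Γ₀(N) of SL(2,ℝ) if and only if there exist integers r, u, s, l and positive divisors δ of q and Δ of σ/v such that g or −g equals the matrix with rows (√δ·rΔ, √δ·u/(vδΔ)) and (√δ·sN/(vδΔ), √δ·lΔ). -/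
open Matrix CongruenceSubgroup

/-- The reduction-of-scalars map `SL(2, ℤ) →* SL(2, ℝ)`. -/
def SL2ZtoSL2R : Matrix.SpecialLinearGroup (Fin 2) ℤ →* Matrix.SpecialLinearGroup (Fin 2) ℝ :=
  Matrix.SpecialLinearGroup.map (Int.castRingHom ℝ)

/-- The subgroup `±Γ₀(N)` of `SL(2, ℝ)`, generated by the image of `Γ₀(N)` and `-1`. -/
def PMGamma0 (N : ℕ) : Subgroup (Matrix.SpecialLinearGroup (Fin 2) ℝ) :=
  (Gamma0 N).map SL2ZtoSL2R ⊔ Subgroup.zpowers (-1)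

theorem neg_one_mem_Gamma0 (N : ℕ) : (-1 : Matrix.SpecialLinearGroup (Fin 2) ℤ) ∈ Gamma0 N := by
  simp [Gamma0_mem]

theorem PMGamma0_eq_map (N : ℕ) : PMGamma0 N = (Gamma0 N).map SL2ZtoSL2R := by
  refine sup_eq_left.mpr ?_
  rw [Subgroup.zpowers_le]
  refine ⟨-1, neg_one_mem_Gamma0 N, ?_⟩
  ext i j
  fin_cases i <;> fin_cases j <;> simp [SL2ZtoSL2R]

theorem mem_PMGamma0_iff (N : ℕ) (h : Matrix.SpecialLinearGroup (Fin 2) ℝ) :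
    h ∈ PMGamma0 N ↔ ∃ a b c d : ℤ, a * d - b * (c * N) = 1 ∧
      (h : Matrix (Fin 2) (Fin 2) ℝ) = !![(a : ℝ), (b : ℝ); (c : ℝ) * (N : ℝ), (d : ℝ)] := by
  rw [PMGamma0_eq_map]
  constructor
  · rintro ⟨γ, hγ, rfl⟩
    have hc := (ZMod.intCast_zmod_eq_zero_iff_dvd _ N).mp (Gamma0_mem.mp hγ)
    obtain ⟨c, hc⟩ := hc
    refine ⟨γ 0 0, γ 0 1, c, γ 1 1, ?_, ?_⟩
    · have := γ.det_coe
      rw [det_fin_two, hc] at this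
      linarith
    · have hc' : ((γ 1 0 : ℤ) : ℝ) = c * N := by rw [hc]; push_cast; ring
      ext i j
      fin_cases i <;> fin_cases j <;> simp [SL2ZtoSL2R, hc']
  · rintro ⟨a, b, c, d, hdet, hh⟩
    obtain ⟨γ, hγ⟩ : ∃ γ : Matrix.SpecialLinearGroup (Fin 2) ℤ,
        (γ : Matrix (Fin 2) (Fin 2) ℤ) = !![a, b; c * N, d] :=
      ⟨⟨_, by rw [det_fin_two_of]; exact hdet⟩, rfl⟩
    refine ⟨γ, Gamma0_mem.mpr (by simp [hγ]), ?_⟩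
    ext i j
    rw [hh]
    fin_cases i <;> fin_cases j <;> simp [SL2ZtoSL2R, hγ]

theorem coe_conj_fin_two (g h : Matrix.SpecialLinearGroup (Fin 2) ℝ) {a b c d : ℝ}
    (hh : (h : Matrix (Fin 2) (Fin 2) ℝ) = !![a, b; c, d]) :
    ((g * h * g⁻¹ : Matrix.SpecialLinearGroup (Fin 2) ℝ) : Matrix (Fin 2) (Fin 2) ℝ) =
      !![(g 0 0 * a + g 0 1 * c) * g 1 1 - (g 0 0 * b + g 0 1 * d) * g 1 0,
        (g 0 0 * b + g 0 1 * d) * g 0 0 - (g 0 0 * a + g 0 1 * c) * g 0 1;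
        (g 1 0 * a + g 1 1 * c) * g 1 1 - (g 1 0 * b + g 1 1 * d) * g 1 0,
        (g 1 0 * b + g 1 1 * d) * g 0 0 - (g 1 0 * a + g 1 1 * c) * g 0 1] := by
  rw [Matrix.SpecialLinearGroup.coe_mul, Matrix.SpecialLinearGroup.coe_mul,
    Matrix.SpecialLinearGroup.coe_inv, hh, adjugate_fin_two]
  ext i j
  fin_cases i <;> fin_cases j <;> simp [Matrix.mul_apply, Fin.sum_univ_two] <;> ring

/-- A real matrix `√e · !![r, u / (v e); s v M, l]` of determinant one conjugates `Γ₀(v² e M)` into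
itself as soon as `v` divides all the differences of diagonal entries. -/
theorem conj_mem_PMGamma0 {N v e M : ℕ} (hv0 : 0 < v) (he0 : 0 < e) (hN : N = v ^ 2 * e * M)
    (hv : ∀ γ : Matrix.SpecialLinearGroup (Fin 2) ℤ, γ ∈ Gamma0 N →
      (v : ℤ) ∣ ((γ : Matrix (Fin 2) (Fin 2) ℤ) 0 0 - (γ : Matrix (Fin 2) (Fin 2) ℤ) 1 1))
    {r u s l : ℤ} {g : Matrix.SpecialLinearGroup (Fin 2) ℝ}
    (hg : (g : Matrix (Fin 2) (Fin 2) ℝ) =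
      !![√e * r, √e * (u / (v * e)); √e * (s * v * M), √e * l])
    {h : Matrix.SpecialLinearGroup (Fin 2) ℝ} (hh : h ∈ PMGamma0 N) : g * h * g⁻¹ ∈ PMGamma0 N := by
  have hvR : (v : ℝ) ≠ 0 := by positivity
  have heR : (e : ℝ) ≠ 0 := by positivity
  have hsq : √(e : ℝ) * √e = e := Real.mul_self_sqrt (by positivity)
  rw [mem_PMGamma0_iff] at hh ⊢
  obtain ⟨a, b, c, d, hdet, hh⟩ := hh
  obtain ⟨t, ht⟩ : (v : ℤ) ∣ a - d :=
    hv ⟨!![a, b; c * N, d], by rw [det_fin_two_of]; exact hdet⟩ (Gamma0_mem.mpr (by simp))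
  have htR : (a : ℝ) = d + v * t := by
    have : ((a - d : ℤ) : ℝ) = ((v * t : ℤ) : ℝ) := by rw [ht]
    push_cast at this
    linarith
  have hNR : (N : ℝ) = v ^ 2 * e * M := by rw [hN]; push_cast; ring
  have hconj := coe_conj_fin_two g h hh
  have hdg : (e * (r * l) - u * s * M : ℤ) = 1 := by
    have := g.det_coe
    rw [hg, det_fin_two_of] at this
    have h2 : (e * (r * l) - u * s * M : ℝ) = 1 := by
      rw [← this]
      trans (√(e : ℝ) * √e) * (r * l) - (√(e : ℝ) * √e) * (u * s * M / e)
      · rw [hsq]; field_simp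
      · field_simp
    exact_mod_cast h2
  have key : ((g * h * g⁻¹ : Matrix.SpecialLinearGroup (Fin 2) ℝ) : Matrix (Fin 2) (Fin 2) ℝ) =
      !![((e * l * r * a + e * l * u * c * v * M - e * s * v * M * r * b - s * u * M * d : ℤ) : ℝ),
        ((e * r ^ 2 * b - r * u * t - u ^ 2 * c * M : ℤ) : ℝ);
        ((l * s * t + e * l ^ 2 * c - s ^ 2 * M * b : ℤ) : ℝ) * N,
        ((e * r * s * v * M * b + e * r * l * d - u * s * M * a - u * l * c * v * e * M : ℤ) : ℝ)]
      := by
    rw [hconj, hNR]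
    have h00 : g 0 0 = √e * r := by rw [hg]; rfl
    have h01 : g 0 1 = √e * (u / (v * e)) := by rw [hg]; rfl
    have h10 : g 1 0 = √e * (s * v * M) := by rw [hg]; rfl
    have h11 : g 1 1 = √e * l := by rw [hg]; rfl
    rw [h00, h01, h10, h11]
    generalize √(e : ℝ) = w at hsq
    push_cast
    rw [htR, ← hsq]
    rw [← hsq] at heR
    have hw : w ≠ 0 := left_ne_zero_of_mul heR
    ext i j
    fin_cases i <;> fin_cases j <;> simp <;> field_simp <;> ring
  refine ⟨_, _, _, _, ?_, key⟩
  have := (g * h * g⁻¹).det_coe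
  rw [key, det_fin_two_of] at this
  exact_mod_cast this

theorem coe_inv_fin_two_of {g : Matrix.SpecialLinearGroup (Fin 2) ℝ} {a b c d : ℝ}
    (hg : (g : Matrix (Fin 2) (Fin 2) ℝ) = !![a, b; c, d]) :
    ((g⁻¹ : Matrix.SpecialLinearGroup (Fin 2) ℝ) : Matrix (Fin 2) (Fin 2) ℝ) = !![d, -b; -c, a] := by
  rw [Matrix.SpecialLinearGroup.coe_inv, hg, adjugate_fin_two_of]

theorem mem_normalizer_PMGamma0 {N v e M : ℕ} (hv0 : 0 < v) (he0 : 0 < e)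
    (hN : N = v ^ 2 * e * M)
    (hv : ∀ γ : Matrix.SpecialLinearGroup (Fin 2) ℤ, γ ∈ Gamma0 N →
      (v : ℤ) ∣ ((γ : Matrix (Fin 2) (Fin 2) ℤ) 0 0 - (γ : Matrix (Fin 2) (Fin 2) ℤ) 1 1))
    {r u s l : ℤ} {g : Matrix.SpecialLinearGroup (Fin 2) ℝ}
    (hg : (g : Matrix (Fin 2) (Fin 2) ℝ) =
      !![√e * r, √e * (u / (v * e)); √e * (s * v * M), √e * l]) :
    g ∈ Subgroup.normalizer (PMGamma0 N : Set (Matrix.SpecialLinearGroup (Fin 2) ℝ)) := by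
  rw [Subgroup.mem_normalizer_iff]
  refine fun h ↦ ⟨conj_mem_PMGamma0 hv0 he0 hN hv hg, fun hh ↦ ?_⟩
  have hg' : ((g⁻¹ : Matrix.SpecialLinearGroup (Fin 2) ℝ) : Matrix (Fin 2) (Fin 2) ℝ) =
      !![√e * (l : ℤ), √e * ((-u : ℤ) / (v * e)); √e * ((-s : ℤ) * v * M), √e * (r : ℤ)] := by
    rw [coe_inv_fin_two_of hg]
    ext i j
    fin_cases i <;> fin_cases j <;> simp
    ring
  have := conj_mem_PMGamma0 hv0 he0 hN hv hg' hh
  simpa [mul_assoc] using this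

theorem mem_range_intCast_of_squarefree {k : ℕ} (hk : Squarefree k) {ρ : ℚ} {m : ℤ}
    (h : (k : ℚ) * ρ ^ 2 = m) : ∃ n : ℤ, ρ = n := by
  have hd : (ρ.den : ℚ) ≠ 0 := by exact_mod_cast ρ.den_ne_zero
  have h1 : (k : ℤ) * ρ.num ^ 2 = m * ρ.den ^ 2 := by
    have : (k : ℚ) * ρ.num ^ 2 = m * ρ.den ^ 2 := by
      rw [← h]
      nth_rewrite 2 [← Rat.num_div_den ρ]
      field_simp
    exact_mod_cast this
  have hcop : IsCoprime ((ρ.den : ℤ) ^ 2) (ρ.num ^ 2) := by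
    refine IsCoprime.pow (Int.isCoprime_iff_gcd_eq_one.mpr ?_)
    rw [Int.gcd_comm]
    exact ρ.reduced
  have h2 : ((ρ.den : ℤ) ^ 2) ∣ k := hcop.dvd_of_dvd_mul_right ⟨m, by rw [h1]; ring⟩
  have h3 : ρ.den * ρ.den ∣ k := by
    rw [← sq]
    exact_mod_cast h2
  have h4 : ρ.den = 1 := Nat.isUnit_iff.mp (hk _ h3)
  exact ⟨ρ.num, (Rat.den_eq_one_iff ρ |>.mp h4).symm⟩

/-- If all diagonal differences in `Γ₀(N)` multiply `x` into `ℤ`, then so does their gcd. -/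
theorem gcd_mul_mem_range_intCast {N ε : ℕ}
    (hεgcd : ∀ e : ℕ, (∀ γ : Matrix.SpecialLinearGroup (Fin 2) ℤ, γ ∈ Gamma0 N →
      (e : ℤ) ∣ ((γ : Matrix (Fin 2) (Fin 2) ℤ) 0 0 - (γ : Matrix (Fin 2) (Fin 2) ℤ) 1 1)) →
      e ∣ ε) {x : ℝ}
    (hx : ∀ a b c d : ℤ, a * d - b * (c * N) = 1 → ∃ m : ℤ, ((a : ℝ) - d) * x = m) :
    ∃ m : ℤ, (ε : ℝ) * x = m := by
  let S : AddSubgroup ℤ := (Int.castAddHom ℝ).range.comap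
    ((AddMonoidHom.mulRight x).comp (Int.castAddHom ℝ))
  obtain ⟨e, he⟩ := Int.subgroup_cyclic S
  have hS : ∀ n : ℤ, n ∈ S ↔ e ∣ n := fun n ↦ by
    rw [he, AddSubgroup.mem_closure_singleton]
    simp [dvd_def, eq_comm, mul_comm]
  have h1 : e.natAbs ∣ ε := by
    refine hεgcd _ fun γ hγ ↦ ?_
    rw [Int.natAbs_dvd, ← hS]
    obtain ⟨c, hc⟩ := (ZMod.intCast_zmod_eq_zero_iff_dvd _ N).mp (Gamma0_mem.mp hγ)
    have hdet := γ.det_coe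
    rw [det_fin_two, hc] at hdet
    obtain ⟨m, hm⟩ := hx (γ 0 0) (γ 0 1) c (γ 1 1) (by linarith)
    exact ⟨m, by simpa using hm.symm⟩
  obtain ⟨m, hm⟩ := (hS ε).mpr (Int.natAbs_dvd.mp (by exact_mod_cast h1))
  exact ⟨m, by simpa using hm.symm⟩

/-- Integrality of products of entries of a matrix that conjugates `±Γ₀(N)` into itself. -/
theorem integrality_of_conj_mem {N ε : ℕ}
    (hεgcd : ∀ e : ℕ, (∀ γ : Matrix.SpecialLinearGroup (Fin 2) ℤ, γ ∈ Gamma0 N →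
      (e : ℤ) ∣ ((γ : Matrix (Fin 2) (Fin 2) ℤ) 0 0 - (γ : Matrix (Fin 2) (Fin 2) ℤ) 1 1)) →
      e ∣ ε) (hN : 0 < N)
    {g : Matrix.SpecialLinearGroup (Fin 2) ℝ} {α β γ δ : ℝ}
    (hg : (g : Matrix (Fin 2) (Fin 2) ℝ) = !![α, β; γ, δ])
    (hconj : ∀ h ∈ PMGamma0 N, g * h * g⁻¹ ∈ PMGamma0 N) :
    (∃ A : ℤ, α ^ 2 = A) ∧ (∃ C : ℤ, γ ^ 2 = N * C) ∧ (∃ X : ℤ, α * γ = X) ∧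
      (∃ B : ℤ, N * β ^ 2 = B) ∧ (∃ D : ℤ, δ ^ 2 = D) ∧ (∃ y : ℤ, ε * (α * β) = y) ∧
      (∃ z : ℤ, ε * (γ * δ) = N * z) ∧ ∃ w : ℤ, ε * (β * γ) = w := by
  have hNR : (N : ℝ) ≠ 0 := by positivity
  have hdet : α * δ - β * γ = 1 := by
    have := g.det_coe
    rwa [hg, det_fin_two_of] at this
  have key : ∀ a b c d : ℤ, a * d - b * (c * N) = 1 → ∃ m₁ m₂ m₃ : ℤ,
      (α * a + β * (c * N)) * δ - (α * b + β * d) * γ = m₁ ∧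
      (α * b + β * d) * α - (α * a + β * (c * N)) * β = m₂ ∧
      (γ * a + δ * (c * N)) * δ - (γ * b + δ * d) * γ = m₃ * N := by
    intro a b c d h
    let η : Matrix.SpecialLinearGroup (Fin 2) ℝ :=
      ⟨!![(a : ℝ), (b : ℝ); (c : ℝ) * (N : ℝ), (d : ℝ)], by
        rw [det_fin_two_of]; exact_mod_cast h⟩
    have hη : (η : Matrix (Fin 2) (Fin 2) ℝ) = !![(a : ℝ), (b : ℝ); (c : ℝ) * (N : ℝ), (d : ℝ)] :=
      rfl
    obtain ⟨m₁, m₂, m₃, m₄, -, hm⟩ := (mem_PMGamma0_iff N _).mp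
      (hconj η ((mem_PMGamma0_iff N _).mpr ⟨a, b, c, d, h, hη⟩))
    rw [coe_conj_fin_two g η hη] at hm
    have h00 : g 0 0 = α := by rw [hg]; rfl
    have h01 : g 0 1 = β := by rw [hg]; rfl
    have h10 : g 1 0 = γ := by rw [hg]; rfl
    have h11 : g 1 1 = δ := by rw [hg]; rfl
    rw [h00, h01, h10, h11] at hm
    exact ⟨m₁, m₂, m₃, congrFun (congrFun hm 0) 0, congrFun (congrFun hm 0) 1,
      congrFun (congrFun hm 1) 0⟩
  obtain ⟨x₁, x₂, x₃, hx₁, hx₂, hx₃⟩ := key 1 1 0 1 (by ring)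
  obtain ⟨y₁, y₂, y₃, hy₁, hy₂, hy₃⟩ := key 1 0 1 1 (by ring)
  push_cast at hx₁ hx₂ hx₃ hy₁ hy₂ hy₃
  have hA : α ^ 2 = x₂ := by linear_combination hx₂
  have hC : γ ^ 2 = N * (-x₃ : ℤ) := by push_cast; linear_combination -hx₃
  have hX : α * γ = (1 - x₁ : ℤ) := by push_cast; linear_combination -hx₁ + hdet
  have hB : N * β ^ 2 = (-y₂ : ℤ) := by push_cast; linear_combination -hy₂
  have hD : δ ^ 2 = y₃ := mul_right_cancel₀ hNR (by linear_combination hy₃)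
  have hW : N * (β * δ) = (y₁ - 1 : ℤ) := by push_cast; linear_combination hy₁ - hdet
  push_cast at hC hX hB hW
  refine ⟨⟨_, hA⟩, ⟨-x₃, by exact_mod_cast hC⟩, ⟨1 - x₁, by exact_mod_cast hX⟩,
    ⟨-y₂, by exact_mod_cast hB⟩, ⟨_, hD⟩, gcd_mul_mem_range_intCast hεgcd fun a b c d h ↦ ?_, ?_,
    gcd_mul_mem_range_intCast hεgcd fun a b c d h ↦ ?_⟩
  · obtain ⟨m₁, m₂, m₃, h₁, h₂, h₃⟩ := key a b c d h
    refine ⟨b * x₂ + c * y₂ - m₂, ?_⟩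
    push_cast
    linear_combination -h₂ + b * hA - c * hB
  · obtain ⟨z, hz⟩ := gcd_mul_mem_range_intCast hεgcd (x := γ * δ / N) fun a b c d h ↦ by
      obtain ⟨m₁, m₂, m₃, h₁, h₂, h₃⟩ := key a b c d h
      refine ⟨m₃ - c * y₃ - b * x₃, ?_⟩
      field_simp
      push_cast
      linear_combination h₃ + b * hC - c * N * hD
    refine ⟨z, ?_⟩
    field_simp at hz
    linear_combination hz
  · obtain ⟨m₁, m₂, m₃, h₁, h₂, h₃⟩ := key a b c d h
    refine ⟨m₁ - a - c * (y₁ - 1) + b * (1 - x₁), ?_⟩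
    push_cast
    linear_combination h₁ - a * hdet - c * hW + b * hX

/-- If `t²` is a natural number with squarefree part `k`, then every `x` with `t x` rational is a
rational multiple of `√k`. -/
theorem exists_rat_mul_sqrt {t : ℝ} (ht : t ≠ 0) {n : ℕ} (hn : t ^ 2 = n) :
    ∃ k : ℕ, 0 < k ∧ Squarefree k ∧
      ∀ x : ℝ, (∃ ρ : ℚ, t * x = ρ) → ∃ ρ : ℚ, x = √k * ρ := by
  obtain ⟨k, b, hkb, hk⟩ := Nat.sq_mul_squarefree n
  have hn0 : n ≠ 0 := by
    rintro rfl
    exact ht (by simpa using hn)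
  have hb0 : b ≠ 0 := by
    rintro rfl
    exact hn0 (by simp [← hkb])
  have hk0 : 0 < k := Nat.pos_of_ne_zero hk.ne_zero
  have hkb' : (n : ℝ) = b ^ 2 * k := by rw [← hkb]; push_cast; ring
  have hbR : (b : ℝ) ≠ 0 := by exact_mod_cast hb0
  have hkR : (k : ℝ) ≠ 0 := by positivity
  have hsq : √(k : ℝ) ^ 2 = k := Real.sq_sqrt (by positivity)
  refine ⟨k, hk0, hk, fun x ⟨ρ, hρ⟩ ↦ ?_⟩
  have h2 : t ^ 2 = (b * √k) ^ 2 := by rw [hn, hkb', mul_pow, hsq]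
  rcases sq_eq_sq_iff_eq_or_eq_neg.mp h2 with rfl | rfl
  · refine ⟨ρ / (b * k), ?_⟩
    push_cast
    rw [← hρ]
    field_simp
    linear_combination (-x) * hsq
  · refine ⟨-ρ / (b * k), ?_⟩
    push_cast
    rw [← hρ]
    field_simp
    linear_combination (-x) * hsq

/-- A matrix `√k · !![a, b; c, d]` of determinant one with rational `a, b, c, d` whose squared entries
are integral relative to `σ² q` has `k ∣ q`, and its entries have denominators at most `k σ`. -/
theorem exists_int_entries {k q σ : ℕ} (hk : Squarefree k) (hq : Squarefree q) (hσ : 0 < σ)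
    {a b c d : ℚ} {A B C D : ℤ} (hA : k * a ^ 2 = A) (hB : σ ^ 2 * q * (k * b ^ 2) = B)
    (hC : k * c ^ 2 = σ ^ 2 * q * C) (hD : k * d ^ 2 = D) (hdet : k * (a * d - b * c) = 1) :
    ∃ k' : ℕ, q = k * k' ∧ ∃ a' m s d' : ℤ, a = a' ∧ b = m / (k * σ) ∧ c = s * σ * k' ∧ d = d' ∧
      k * (a' * d') - m * s * k' = 1 := by
  have hσ' : (σ : ℚ) ≠ 0 := by positivity
  obtain ⟨a', rfl⟩ := mem_range_intCast_of_squarefree hk hA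
  obtain ⟨d', rfl⟩ := mem_range_intCast_of_squarefree hk hD
  obtain ⟨n, hn⟩ := mem_range_intCast_of_squarefree hk (ρ := c / σ) (m := q * C) (by
    push_cast; field_simp; linear_combination hC)
  have hc : c = n * σ := by rw [← hn]; field_simp
  subst hc
  obtain ⟨f, k₁, q₁, hf, hcop, rfl, rfl⟩ :=
    Nat.exists_coprime' (Nat.gcd_pos_of_pos_left q (Nat.pos_of_ne_zero hk.ne_zero))
  have hf0 : (f : ℚ) ≠ 0 := by positivity
  have hsf : Squarefree (k₁ * q₁) := (Nat.squarefree_mul hcop).mpr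
    ⟨hk.of_mul_left, hq.of_mul_left⟩
  obtain ⟨m, hm⟩ := mem_range_intCast_of_squarefree hsf (ρ := f * σ * b) (m := B) (by
    push_cast at hB ⊢; linear_combination hB)
  have hb : b = m / (f * σ) := by rw [← hm]; field_simp
  subst hb
  have h1 : (k₁ * f : ℤ) * (a' * d') - k₁ * m * n = 1 := by
    have : (k₁ * f : ℚ) * (a' * d') - k₁ * m * n = 1 := by
      rw [← hdet]; push_cast; field_simp
    exact_mod_cast this
  have hk1 : k₁ = 1 := by
    have : (k₁ : ℤ) ∣ 1 := ⟨f * (a' * d') - m * n, by linear_combination -h1⟩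
    exact Nat.dvd_one.mp (by exact_mod_cast this)
  subst hk1
  have h2 : n ^ 2 = q₁ * C := by
    have : (n : ℚ) ^ 2 = q₁ * C := by
      push_cast at hC
      have h3 : (f * σ ^ 2 : ℚ) ≠ 0 := by positivity
      apply mul_left_cancel₀ h3
      linear_combination hC
    exact_mod_cast this
  have h3 : (q₁ : ℤ) ∣ n :=
    ((Int.squarefree_natCast.mpr hq.of_mul_left).dvd_pow_iff_dvd two_ne_zero).mp ⟨C, h2⟩
  obtain ⟨s, rfl⟩ := h3
  refine ⟨q₁, by ring, a', m, s, d', rfl, by push_cast; ring, by push_cast; ring, rfl, ?_⟩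
  push_cast at h1 ⊢
  linear_combination h1

theorem exists_common_factorization {n : ℕ} {a m s d : ℤ} (has : IsCoprime a s)
    (hdm : IsCoprime d m) (ham : (n : ℤ) ∣ a * m) (hsd : (n : ℤ) ∣ s * d) :
    ∃ Δ Δ' : ℕ, n = Δ * Δ' ∧ (Δ : ℤ) ∣ a ∧ (Δ : ℤ) ∣ d ∧ (Δ' : ℤ) ∣ m ∧ (Δ' : ℤ) ∣ s := by
  rw [Int.natCast_dvd, Int.natAbs_mul] at ham
  obtain ⟨Δ, Δ', h1, h2, rfl⟩ := exists_dvd_and_dvd_of_dvd_mul ham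
  rw [← Int.natCast_dvd] at h1 h2
  push_cast at hsd
  exact ⟨Δ, Δ', rfl, h1,
    (has.of_isCoprime_of_dvd_left h1).dvd_of_dvd_mul_left (dvd_of_mul_right_dvd hsd), h2,
    (hdm.symm.of_isCoprime_of_dvd_left h2).dvd_of_dvd_mul_right (dvd_of_mul_left_dvd hsd)⟩

theorem exists_eq_of_mem_normalizer {N σ q ε v : ℕ} (hN : 0 < N) (hσ : 0 < σ)
    (hqsf : Squarefree q) (hNσq : N = σ ^ 2 * q) (hε0 : ε ≠ 0)
    (hεgcd : ∀ e : ℕ, (∀ γ : Matrix.SpecialLinearGroup (Fin 2) ℤ, γ ∈ Gamma0 N →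
      (e : ℤ) ∣ ((γ : Matrix (Fin 2) (Fin 2) ℤ) 0 0 - (γ : Matrix (Fin 2) (Fin 2) ℤ) 1 1)) →
      e ∣ ε) (hv : v = Nat.gcd σ ε) {g : Matrix.SpecialLinearGroup (Fin 2) ℝ}
    (hconj : ∀ h ∈ PMGamma0 N, g * h * g⁻¹ ∈ PMGamma0 N) :
    ∃ (r u s l : ℤ) (δ Δ : ℕ), 0 < δ ∧ δ ∣ q ∧ 0 < Δ ∧ Δ ∣ σ / v ∧
      (g : Matrix (Fin 2) (Fin 2) ℝ) =
        !![√δ * ((r : ℝ) * (Δ : ℝ)), √δ * (u : ℝ) / ((v : ℝ) * (δ : ℝ) * (Δ : ℝ));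
          √δ * ((s : ℝ) * (N : ℝ)) / ((v : ℝ) * (δ : ℝ) * (Δ : ℝ)),
          √δ * ((l : ℝ) * (Δ : ℝ))] := by
  have hg := Matrix.eta_fin_two (g : Matrix (Fin 2) (Fin 2) ℝ)
  have hdet := g.det_coe
  rw [det_fin_two] at hdet
  generalize g 0 0 = α at hg hdet
  generalize g 0 1 = β at hg hdet
  generalize g 1 0 = γ at hg hdet
  generalize g 1 1 = δ at hg hdet
  obtain ⟨⟨A, hA⟩, ⟨C, hC⟩, ⟨X, hX⟩, ⟨B, hB⟩, ⟨D, hD⟩, ⟨y, hy⟩, ⟨z, hz⟩, ⟨w, hw⟩⟩ :=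
    integrality_of_conj_mem hεgcd hN hg hconj
  have hεR : (ε : ℝ) ≠ 0 := by exact_mod_cast hε0
  have hβγ : β * γ = w / ε := by field_simp; linear_combination hw
  obtain ⟨k, hk0, hksf, a, b, c, d, rfl, rfl, rfl, rfl⟩ : ∃ k : ℕ, 0 < k ∧ Squarefree k ∧
      ∃ a b c d : ℚ, α = √k * a ∧ β = √k * b ∧ γ = √k * c ∧ δ = √k * d := by
    by_cases hα : α = 0
    · have hγ : γ ≠ 0 := by
        rintro rfl
        simp [hα] at hdet
      have hC0 : (0 : ℤ) ≤ N * C := by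
        have : (0 : ℝ) ≤ N * C := hC ▸ sq_nonneg γ
        exact_mod_cast this
      obtain ⟨n, hn⟩ := Int.eq_ofNat_of_zero_le hC0
      have hn' : γ ^ 2 = n := by rw [hC]; exact_mod_cast hn
      obtain ⟨k, hk0, hk, H⟩ := exists_rat_mul_sqrt hγ hn'
      obtain ⟨a, ha⟩ := H α ⟨X, by push_cast; linear_combination hX⟩
      obtain ⟨b, hb⟩ := H β ⟨w / ε, by push_cast; linear_combination hβγ⟩
      obtain ⟨c, hc⟩ := H γ ⟨n, by push_cast; linear_combination hn'⟩
      obtain ⟨d, hd⟩ := H δ ⟨N * z / ε, by push_cast; field_simp; linear_combination hz⟩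
      exact ⟨k, hk0, hk, a, b, c, d, ha, hb, hc, hd⟩
    · have hA0 : (0 : ℤ) ≤ A := by
        have : (0 : ℝ) ≤ A := hA ▸ sq_nonneg α
        exact_mod_cast this
      obtain ⟨n, rfl⟩ := Int.eq_ofNat_of_zero_le hA0
      have hn' : α ^ 2 = n := by rw [hA]; norm_cast
      obtain ⟨k, hk0, hk, H⟩ := exists_rat_mul_sqrt hα hn'
      obtain ⟨a, ha⟩ := H α ⟨n, by push_cast; linear_combination hn'⟩
      obtain ⟨b, hb⟩ := H β ⟨y / ε, by push_cast; field_simp; linear_combination hy⟩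
      obtain ⟨c, hc⟩ := H γ ⟨X, by push_cast; linear_combination hX⟩
      obtain ⟨d, hd⟩ := H δ ⟨1 + w / ε, by push_cast; linear_combination hdet + hβγ⟩
      exact ⟨k, hk0, hk, a, b, c, d, ha, hb, hc, hd⟩
  have hsq : √(k : ℝ) ^ 2 = k := Real.sq_sqrt (by positivity)
  have hNR : (N : ℝ) = σ ^ 2 * q := by rw [hNσq]; push_cast; ring
  obtain ⟨k', rfl, a, m, s, d, rfl, rfl, rfl, rfl, hdet'⟩ :=
    exists_int_entries (a := a) (b := b) (c := c) (d := d) (A := A) (B := B) (C := C) (D := D)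
      hksf hqsf hσ
      (by
        have : (k : ℝ) * a ^ 2 = A := by linear_combination hA - a ^ 2 * hsq
        exact_mod_cast this)
      (by
        have : (σ : ℝ) ^ 2 * q * (k * b ^ 2) = B := by
          rw [← hNR]; linear_combination hB - N * b ^ 2 * hsq
        exact_mod_cast this)
      (by
        have : (k : ℝ) * c ^ 2 = σ ^ 2 * q * C := by
          rw [← hNR]; linear_combination hC - c ^ 2 * hsq
        exact_mod_cast this)
      (by
        have : (k : ℝ) * d ^ 2 = D := by linear_combination hD - d ^ 2 * hsq
        exact_mod_cast this)
      (by
        have : (k : ℝ) * (a * d - b * c) = 1 := by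
          linear_combination hdet - (a * d - b * c : ℝ) * hsq
        exact_mod_cast this)
  have hkR : (k : ℝ) ≠ 0 := by positivity
  have hσR : (σ : ℝ) ≠ 0 := by positivity
  have hk'R : (k' : ℝ) ≠ 0 := by
    have : k' ≠ 0 := right_ne_zero_of_mul hqsf.ne_zero
    exact_mod_cast this
  push_cast at hg hy hz hNR
  have hεam : (ε : ℤ) * (a * m) = σ * y := by
    have : (ε : ℝ) * (a * m) = σ * y := by
      rw [← hy]
      field_simp
      linear_combination -(a * m : ℝ) * hsq
    exact_mod_cast this
  have hεsd : (ε : ℤ) * (s * d) = σ * z := by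
    have : (ε : ℝ) * (s * d) = σ * z := by
      have h0 : (k * k' * σ : ℝ) ≠ 0 := by positivity
      apply mul_left_cancel₀ h0
      rw [hNR] at hz
      linear_combination hz - (ε * s * σ * k' * d : ℝ) * hsq
    exact_mod_cast this
  have hv0 : 0 < v := hv ▸ Nat.gcd_pos_of_pos_left _ hσ
  obtain ⟨f, σ', ε', hf, hcop, hσ', hε'⟩ := Nat.exists_coprime' (hv ▸ hv0)
  have hfv : f = v := by
    rw [hv, hσ', hε', Nat.gcd_mul_right, hcop.gcd_eq_one, one_mul]
  subst hfv
  have hcancel : ∀ {x t : ℤ}, (ε : ℤ) * x = σ * t → (σ' : ℤ) ∣ x := fun {x t} h ↦ by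
    have hf0 : (f : ℤ) ≠ 0 := by positivity
    refine (Nat.isCoprime_iff_coprime.mpr hcop).dvd_of_dvd_mul_left ⟨t, mul_left_cancel₀ hf0 ?_⟩
    rw [hσ', hε'] at h
    push_cast at h
    linear_combination h
  obtain ⟨Δ, Δ', rfl, ⟨r, rfl⟩, ⟨l, rfl⟩, ⟨u, rfl⟩, ⟨s, rfl⟩⟩ :=
    exists_common_factorization (n := σ') (a := a) (m := m) (s := s) (d := d)
      ⟨k * d, -(m * k'), by linear_combination hdet'⟩ ⟨k * a, -(s * k'), by linear_combination hdet'⟩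
      (hcancel hεam) (hcancel hεsd)
  have hΔ0 : 0 < Δ := by
    rcases Nat.eq_zero_or_pos Δ with rfl | h
    · simp [hσ'] at hσ
    · exact h
  have hΔ'0 : 0 < Δ' := by
    rcases Nat.eq_zero_or_pos Δ' with rfl | h
    · simp [hσ'] at hσ
    · exact h
  have hfR : (f : ℝ) ≠ 0 := by positivity
  have hΔR : (Δ : ℝ) ≠ 0 := by positivity
  have hΔ'R : (Δ' : ℝ) ≠ 0 := by positivity
  refine ⟨r, u, s, l, k, Δ, hk0, dvd_mul_right _ _, hΔ0, ⟨Δ', ?_⟩, ?_⟩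
  · rw [hσ', Nat.mul_div_cancel _ hv0]
  · have hσR' : (σ : ℝ) = Δ * Δ' * f := by rw [hσ']; push_cast; ring
    rw [hg, hNR, hσR']
    push_cast
    ext i j
    fin_cases i <;> fin_cases j <;> simp <;> field_simp <;> simp

/-- **Newman's theorem.** Write `N = σ² q` with `q` squarefree, let `ε` be the gcd of all
`a - d` over matrices in `Γ₀(N)` with diagonal `a, d`, and `v = gcd(σ, ε)`. A matrix
`g ∈ SL(2, ℝ)` normalizes `±Γ₀(N)` iff `±g` has the form
`√δ · !![rΔ, u/(vδΔ); sN/(vδΔ), lΔ]` with `r, u, s, l ∈ ℤ`, `δ ∣ q` and `Δ ∣ σ/v`. -/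
theorem newman_normalizer_Gamma0
    (N : ℕ) (hN : 0 < N) (σ q : ℕ) (hσ : 0 < σ) (hq : 0 < q) (hqsf : Squarefree q)
    (hNσq : N = σ ^ 2 * q)
    (ε : ℕ)
    (hε : ∀ γ : Matrix.SpecialLinearGroup (Fin 2) ℤ, γ ∈ Gamma0 N →
      (ε : ℤ) ∣ ((γ : Matrix (Fin 2) (Fin 2) ℤ) 0 0 - (γ : Matrix (Fin 2) (Fin 2) ℤ) 1 1))
    (hεgcd : ∀ e : ℕ, (∀ γ : Matrix.SpecialLinearGroup (Fin 2) ℤ, γ ∈ Gamma0 N →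
      (e : ℤ) ∣ ((γ : Matrix (Fin 2) (Fin 2) ℤ) 0 0 - (γ : Matrix (Fin 2) (Fin 2) ℤ) 1 1)) →
      e ∣ ε)
    (v : ℕ) (hv : v = Nat.gcd σ ε)
    (g : Matrix.SpecialLinearGroup (Fin 2) ℝ) :
    g ∈ Subgroup.normalizer (PMGamma0 N) ↔
      ∃ (r u s l : ℤ) (δ Δ : ℕ), 0 < δ ∧ δ ∣ q ∧ 0 < Δ ∧ Δ ∣ σ / v ∧
        ((g : Matrix (Fin 2) (Fin 2) ℝ) =
            !![Real.sqrt δ * ((r : ℝ) * (Δ : ℝ)),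
                Real.sqrt δ * (u : ℝ) / ((v : ℝ) * (δ : ℝ) * (Δ : ℝ));
              Real.sqrt δ * ((s : ℝ) * (N : ℝ)) / ((v : ℝ) * (δ : ℝ) * (Δ : ℝ)),
                Real.sqrt δ * ((l : ℝ) * (Δ : ℝ))] ∨
          (g : Matrix (Fin 2) (Fin 2) ℝ) =
            -!![Real.sqrt δ * ((r : ℝ) * (Δ : ℝ)),
                Real.sqrt δ * (u : ℝ) / ((v : ℝ) * (δ : ℝ) * (Δ : ℝ));
              Real.sqrt δ * ((s : ℝ) * (N : ℝ)) / ((v : ℝ) * (δ : ℝ) * (Δ : ℝ)),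
                Real.sqrt δ * ((l : ℝ) * (Δ : ℝ))]) := by
  have hε0 : ε ≠ 0 := by
    rintro rfl
    have := hε ⟨!![1 + N, 1; N, 1], by rw [det_fin_two_of]; ring⟩ (Gamma0_mem.mpr (by simp))
    simp at this
    omega
  have hv0 : 0 < v := hv ▸ Nat.gcd_pos_of_pos_left _ hσ
  have hvσ : v ∣ σ := hv ▸ Nat.gcd_dvd_left _ _
  have hvε : v ∣ ε := hv ▸ Nat.gcd_dvd_right _ _
  obtain ⟨σ', hσ'⟩ := hvσ
  have hσv : σ / v = σ' := by rw [hσ', Nat.mul_div_cancel_left _ hv0]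
  constructor
  · intro hg
    obtain ⟨r, u, s, l, δ, Δ, h1, h2, h3, h4, h5⟩ := exists_eq_of_mem_normalizer hN hσ hqsf hNσq
      hε0 hεgcd hv fun h ↦ (Subgroup.mem_normalizer_iff.mp hg h).mp
    exact ⟨r, u, s, l, δ, Δ, h1, h2, h3, h4, Or.inl h5⟩
  · rintro ⟨r, u, s, l, δ, Δ, hδ, hδq, hΔ, hΔσ, h⟩
    rw [hσv] at hΔσ
    obtain ⟨Δ', rfl⟩ := hΔσ
    obtain ⟨q', rfl⟩ := hδq
    have hN' : N = v ^ 2 * (δ * Δ ^ 2) * (Δ' ^ 2 * q') := by rw [hNσq, hσ']; ring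
    have hvdvd : ∀ γ : Matrix.SpecialLinearGroup (Fin 2) ℤ, γ ∈ Gamma0 N → (v : ℤ) ∣
        ((γ : Matrix (Fin 2) (Fin 2) ℤ) 0 0 - (γ : Matrix (Fin 2) (Fin 2) ℤ) 1 1) :=
      fun γ hγ ↦ (Int.natCast_dvd_natCast.mpr hvε).trans (hε γ hγ)
    have he : √((δ * Δ ^ 2 : ℕ) : ℝ) = √δ * Δ := by
      push_cast
      rw [Real.sqrt_mul (by positivity), Real.sqrt_sq (by positivity)]
    have hNR : (N : ℝ) = v ^ 2 * (δ * Δ ^ 2) * (Δ' ^ 2 * q') := by rw [hN']; push_cast; ring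
    have hvR : (v : ℝ) ≠ 0 := by positivity
    have hδR : (δ : ℝ) ≠ 0 := by positivity
    have hΔR : (Δ : ℝ) ≠ 0 := by positivity
    rcases h with h | h
    · refine mem_normalizer_PMGamma0 (r := r) (u := u) (s := s) (l := l) hv0
        (by positivity) hN' hvdvd ?_
      rw [h, he, hNR]
      ext i j
      fin_cases i <;> fin_cases j <;> simp <;> field_simp
    · refine mem_normalizer_PMGamma0 (r := -r) (u := -u) (s := -s) (l := -l) hv0
        (by positivity) hN' hvdvd ?_
      rw [h, he, hNR]
      ext i j
      fin_cases i <;> fin_cases j <;> simp <;> field_simp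
end

section
/- Let N be a positive integer; write N = σ²q with q squarefree, let ε be the gcd of all integers a − d over matrices in Γ₀(N) with diagonal entries a, d, and set v(N) = gcd(σ, ε). Then every g ∈ SL(2,ℝ) normalizing the subgroup ±Γ₀(N) can be written as g = ±γ · w_m · Ω, where γ ∈ Γ₀(N), w_m is an Atkin–Lehner matrix for a Hall divisor m of N with gcd(m, 6) = 1, and Ω belongs to the subgroup of SL(2,ℝ) generated by the matrix S_{v(N)} = [[1, 1/v(N)],[0, 1]] together with Atkin–Lehner matrices w_{2^{v₂(N)}} and w_{3^{v₃(N)}} for the Hall divisors 2^{v₂(N)} and 3^{v₃(N)} of N. -/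
open Matrix CongruenceSubgroup

/-- `w` is an Atkin–Lehner matrix of level `N` for the Hall divisor `m` of `N`:
a matrix of the form `(1/√m)·!![ma, b; Nc, md]` with integer entries (and determinant 1,
which holds automatically as `w ∈ SL(2, ℝ)`). -/
def IsAtkinLehner (N m : ℕ) (w : Matrix.SpecialLinearGroup (Fin 2) ℝ) : Prop :=
  ∃ a b c d : ℤ, (w : Matrix (Fin 2) (Fin 2) ℝ) =
    (Real.sqrt m)⁻¹ • !![(m : ℝ) * (a : ℝ), (b : ℝ); (N : ℝ) * (c : ℝ), (m : ℝ) * (d : ℝ)]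

lemma det_eq_one_entries {R : Type*} [CommRing R] (g : Matrix.SpecialLinearGroup (Fin 2) R) :
    g 0 0 * g 1 1 - g 0 1 * g 1 0 = 1 := by
  rw [← det_fin_two, g.det_coe]

lemma mul_entry {R : Type*} [CommRing R] (A B : Matrix.SpecialLinearGroup (Fin 2) R)
    (i j : Fin 2) : (A * B) i j = A i 0 * B 0 j + A i 1 * B 1 j := by
  rw [Matrix.SpecialLinearGroup.coe_mul, Matrix.mul_apply, Fin.sum_univ_two]

lemma inv_entry {R : Type*} [CommRing R] (A : Matrix.SpecialLinearGroup (Fin 2) R) :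
    A⁻¹ 0 0 = A 1 1 ∧ A⁻¹ 0 1 = -A 0 1 ∧ A⁻¹ 1 0 = -A 1 0 ∧ A⁻¹ 1 1 = A 0 0 := by
  rw [Matrix.SpecialLinearGroup.SL2_inv_expl]; exact ⟨rfl, rfl, rfl, rfl⟩

/-- `g` has the form `s • !![e a, b / h; h M c, e d]` with integers `a, b, c, d` and `s ^ 2 = 1 / e`.
For `h = 1` these are the Atkin–Lehner matrices of level `M`; in general they are
the conjugates of such matrices by `diag(h, 1)`. -/
def IsScaledAtkinLehner (M h e : ℕ) (g : Matrix.SpecialLinearGroup (Fin 2) ℝ) : Prop :=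
  ∃ (s : ℝ) (a b c d : ℤ), s ^ 2 * e = 1 ∧ g 0 0 = s * e * a ∧ h * g 0 1 = s * b ∧
    g 1 0 = h * s * M * c ∧ g 1 1 = s * e * d

lemma isAtkinLehner_iff {N m : ℕ} {w : Matrix.SpecialLinearGroup (Fin 2) ℝ} (hm : 0 < m) :
    IsAtkinLehner N m w ↔ IsScaledAtkinLehner N 1 m w := by
  have hm' : (0 : ℝ) < m := by exact_mod_cast hm
  have hs : ((Real.sqrt m)⁻¹) ^ 2 * (m : ℝ) = 1 := by
    rw [inv_pow, Real.sq_sqrt hm'.le, inv_mul_cancel₀ hm'.ne']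
  constructor
  · rintro ⟨a, b, c, d, hw⟩
    refine ⟨(Real.sqrt m)⁻¹, a, b, c, d, hs, ?_, ?_, ?_, ?_⟩ <;> rw [hw] <;> simp <;> ring
  · rintro ⟨s, a, b, c, d, hse, h00, h01, h10, h11⟩
    have : s ^ 2 = ((Real.sqrt m)⁻¹) ^ 2 := mul_right_cancel₀ hm'.ne' (hse.trans hs.symm)
    rcases sq_eq_sq_iff_eq_or_eq_neg.mp this with h | h
    · refine ⟨a, b, c, d, ?_⟩
      rw [← h]
      ext i j
      fin_cases i <;> fin_cases j <;> simp at h00 h01 h10 h11 ⊢ <;> linarith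
    · refine ⟨-a, -b, -c, -d, ?_⟩
      rw [← neg_eq_iff_eq_neg.mpr h]
      ext i j
      fin_cases i <;> fin_cases j <;> simp at h00 h01 h10 h11 ⊢ <;> linarith

lemma IsScaledAtkinLehner.inv_mul {M h f e : ℕ} {w g : Matrix.SpecialLinearGroup (Fin 2) ℝ}
    (hw : IsScaledAtkinLehner M h f w) (hg : IsScaledAtkinLehner M h (f * e) g)
    (hM : f * e ∣ M) (hh : 0 < h) : IsScaledAtkinLehner M h e (w⁻¹ * g) := by
  obtain ⟨k, hk⟩ := hM
  obtain ⟨s, a', b', c', d', hs, w00, w01, w10, w11⟩ := hw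
  obtain ⟨t, a, b, c, d, ht, g00, g01, g10, g11⟩ := hg
  have hMk : (M : ℝ) = f * e * k := by exact_mod_cast hk
  have hh' : (h : ℝ) ≠ 0 := by exact_mod_cast hh.ne'
  push_cast at ht g00 g11
  have w01' : w 0 1 = s * b' / h := by rw [← w01]; field_simp
  have g01' : g 0 1 = t * b / h := by rw [← g01]; field_simp
  refine ⟨s * t * f, f * d' * a - b' * k * c, d' * b - b' * e * d, a' * c - c' * e * a,
    f * a' * d - k * c' * b, ?_, ?_, ?_, ?_, ?_⟩
  · linear_combination hs + (s ^ 2 * f) * ht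
  all_goals
    simp only [mul_entry, inv_entry]
    push_cast
    simp only [g00, g01', g10, g11, w00, w01', w10, w11, hMk]
    field_simp
    ring

lemma IsScaledAtkinLehner.of_isAtkinLehner {M h k e N m : ℕ}
    {w : Matrix.SpecialLinearGroup (Fin 2) ℝ}
    (hw : IsAtkinLehner N m w) (hN : N = M * h ^ 2) (hm : m = k ^ 2 * e) (hkh : k ∣ h)
    (hm0 : 0 < m) : IsScaledAtkinLehner M h e w := by
  obtain ⟨s, a, b, c, d, hs, w00, w01, w10, w11⟩ := (isAtkinLehner_iff hm0).mp hw
  obtain ⟨l, rfl⟩ := hkh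
  subst hN hm
  push_cast at *
  rw [one_mul] at w01
  refine ⟨s * k, k * a, l * b, l * c, k * d, by linear_combination hs, ?_, ?_, ?_, ?_⟩ <;>
    push_cast <;> simp only [w00, w01, w10, w11] <;> ring

lemma exists_isAtkinLehner {N m : ℕ} (hm : 0 < m) (hmN : m ∣ N) (hco : Nat.Coprime m (N / m)) :
    ∃ w : Matrix.SpecialLinearGroup (Fin 2) ℝ, IsAtkinLehner N m w := by
  obtain ⟨x, y, hxy⟩ := Nat.isCoprime_iff_coprime.mpr hco
  obtain ⟨k, rfl⟩ := hmN
  rw [Nat.mul_div_cancel_left _ hm] at hxy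
  have hm' : (0 : ℝ) < m := by exact_mod_cast hm
  have hs : ((Real.sqrt m)⁻¹) ^ 2 * (m : ℝ) = 1 := by
    rw [inv_pow, Real.sq_sqrt hm'.le, inv_mul_cancel₀ hm'.ne']
  have hxy' : (x : ℝ) * m + y * k = 1 := by exact_mod_cast hxy
  refine ⟨⟨(Real.sqrt m)⁻¹ • !![(m : ℝ) * x, -y; ((m * k : ℕ) : ℝ) * 1, (m : ℝ) * 1], ?_⟩,
    x, -y, 1, 1, by simp⟩
  simp only [smul_of, det_fin_two, of_apply, smul_cons, smul_eq_mul, cons_val_zero, cons_val_one]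
  push_cast
  linear_combination hs + ((Real.sqrt m)⁻¹) ^ 2 * m * hxy'

/-- The unipotent matrix `!![1, x; 0, 1]`. -/
def upperUnipotent (x : ℝ) : Matrix.SpecialLinearGroup (Fin 2) ℝ := ⟨!![1, x; 0, 1], by simp⟩

/-- The unipotent matrix `!![1, 0; x, 1]`. -/
def lowerUnipotent (x : ℝ) : Matrix.SpecialLinearGroup (Fin 2) ℝ := ⟨!![1, 0; x, 1], by simp⟩

lemma upperUnipotent_entry (x : ℝ) : upperUnipotent x 0 0 = 1 ∧ upperUnipotent x 0 1 = x ∧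
    upperUnipotent x 1 0 = 0 ∧ upperUnipotent x 1 1 = 1 := ⟨rfl, rfl, rfl, rfl⟩

lemma lowerUnipotent_entry (x : ℝ) : lowerUnipotent x 0 0 = 1 ∧ lowerUnipotent x 0 1 = 0 ∧
    lowerUnipotent x 1 0 = x ∧ lowerUnipotent x 1 1 = 1 := ⟨rfl, rfl, rfl, rfl⟩

lemma upperUnipotent_zero : upperUnipotent 0 = 1 := by
  ext i j
  fin_cases i <;> fin_cases j <;> simp [upperUnipotent]

lemma upperUnipotent_add (x y : ℝ) :
    upperUnipotent (x + y) = upperUnipotent x * upperUnipotent y := by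
  ext i j
  rw [mul_entry]
  fin_cases i <;> fin_cases j <;> simp [upperUnipotent, add_comm]

lemma upperUnipotent_neg (x : ℝ) : upperUnipotent (-x) = (upperUnipotent x)⁻¹ := by
  rw [eq_inv_iff_mul_eq_one, ← upperUnipotent_add, neg_add_cancel, upperUnipotent_zero]

/-- The additive group of all `x` for which `!![1, x; 0, 1]` lies in `H`. -/
def upperParams (H : Subgroup (Matrix.SpecialLinearGroup (Fin 2) ℝ)) : AddSubgroup ℝ where
  carrier := {x | upperUnipotent x ∈ H}
  zero_mem' := by simp [upperUnipotent_zero, H.one_mem]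
  add_mem' hx hy := by simpa [upperUnipotent_add] using H.mul_mem hx hy
  neg_mem' hx := by simpa [upperUnipotent_neg] using hx

lemma mem_upperParams {H : Subgroup (Matrix.SpecialLinearGroup (Fin 2) ℝ)} {x : ℝ} :
    x ∈ upperParams H ↔ upperUnipotent x ∈ H := Iff.rfl

lemma lowerUnipotent_zero : lowerUnipotent 0 = 1 := by
  ext i j
  fin_cases i <;> fin_cases j <;> simp [lowerUnipotent]

lemma lowerUnipotent_add (x y : ℝ) :
    lowerUnipotent (x + y) = lowerUnipotent x * lowerUnipotent y := by
  ext i j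
  rw [mul_entry]
  fin_cases i <;> fin_cases j <;> simp [lowerUnipotent]

lemma lowerUnipotent_neg (x : ℝ) : lowerUnipotent (-x) = (lowerUnipotent x)⁻¹ := by
  rw [eq_inv_iff_mul_eq_one, ← lowerUnipotent_add, neg_add_cancel, lowerUnipotent_zero]

/-- The additive group of all `x` for which `!![1, 0; x, 1]` lies in `H`. -/
def lowerParams (H : Subgroup (Matrix.SpecialLinearGroup (Fin 2) ℝ)) : AddSubgroup ℝ where
  carrier := {x | lowerUnipotent x ∈ H}
  zero_mem' := by simp [lowerUnipotent_zero, H.one_mem]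
  add_mem' hx hy := by simpa [lowerUnipotent_add] using H.mul_mem hx hy
  neg_mem' hx := by simpa [lowerUnipotent_neg] using hx

lemma mem_lowerParams {H : Subgroup (Matrix.SpecialLinearGroup (Fin 2) ℝ)} {x : ℝ} :
    x ∈ lowerParams H ↔ lowerUnipotent x ∈ H := Iff.rfl

lemma conj_upperUnipotent_entry (w : Matrix.SpecialLinearGroup (Fin 2) ℝ) (x : ℝ) :
    (w * upperUnipotent x * w⁻¹) 0 0 = 1 - x * (w 0 0 * w 1 0) ∧
    (w * upperUnipotent x * w⁻¹) 0 1 = x * w 0 0 ^ 2 ∧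
    (w * upperUnipotent x * w⁻¹) 1 0 = -(x * w 1 0 ^ 2) ∧
    (w * upperUnipotent x * w⁻¹) 1 1 = 1 + x * (w 0 0 * w 1 0) := by
  have h := det_eq_one_entries w
  simp only [mul_entry, inv_entry, upperUnipotent_entry]
  refine ⟨?_, ?_, ?_, ?_⟩
  · linear_combination h
  · ring
  · ring
  · linear_combination h

lemma exists_isCoprime_add_mul {a x : ℤ} (hax : IsCoprime a x) (i j : ℕ) :
    ∃ k : ℤ, IsCoprime (a + k * x) (2 ^ i * 3 ^ j) := by
  have key : ∀ p : ℤ, Prime p → ¬(p ∣ a ∧ p ∣ x) := fun p hp ⟨h1, h2⟩ =>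
    hp.not_isUnit (hax.isUnit_of_dvd' h1 h2)
  have h2 := key 2 Int.prime_two
  have h3 := key 3 Int.prime_three
  obtain ⟨k, hk2, hk3⟩ : ∃ k : ℤ, ¬(2 : ℤ) ∣ a + k * x ∧ ¬(3 : ℤ) ∣ a + k * x := by
    by_contra! hcon
    have c0 := hcon 0
    have c1 := hcon 1
    have c2 := hcon 2
    have c3 := hcon 3
    have c4 := hcon 4
    have c5 := hcon 5
    omega
  refine ⟨k, IsCoprime.mul_right (IsCoprime.pow_right ?_) (IsCoprime.pow_right ?_)⟩
  · exact ((Int.prime_two.coprime_iff_not_dvd).mpr hk2).symm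
  · exact ((Int.prime_three.coprime_iff_not_dvd).mpr hk3).symm

lemma IsCoprime.exists_dvd_add_mul {a h : ℤ} (hah : IsCoprime a h) (b : ℤ) :
    ∃ k, h ∣ b + k * a := by
  obtain ⟨u, v, huv⟩ := hah
  exact ⟨-b * u, b * v, by linear_combination (-b) * huv⟩

/-- The group generated by `!![1, 1/h; 0, 1]`, `!![1, 0; N/h, 1]` and `Γ₀(N)` contains the conjugate
of `Γ₀(N/h²)` by `diag(h, 1)`. -/
lemma IsScaledAtkinLehner.mem_of_unipotents {M h i j N : ℕ}
    (hh : h = 2 ^ i * 3 ^ j) (hN : N = M * h ^ 2)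
    {H : Subgroup (Matrix.SpecialLinearGroup (Fin 2) ℝ)}
    (hΓ : ∀ x, IsScaledAtkinLehner N 1 1 x → x ∈ H)
    (hU : (h : ℝ)⁻¹ ∈ upperParams H) (hL : (M * h : ℝ) ∈ lowerParams H)
    {g : Matrix.SpecialLinearGroup (Fin 2) ℝ} (hg : IsScaledAtkinLehner M h 1 g) : g ∈ H := by
  have hU' (k : ℤ) : upperUnipotent (k / h) ∈ H := by
    simpa [div_eq_mul_inv, mem_upperParams] using (upperParams H).zsmul_mem hU k
  have hL' (k : ℤ) : lowerUnipotent (k * (M * h)) ∈ H := by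
    simpa [mem_lowerParams] using (lowerParams H).zsmul_mem hL k
  have hh0 : (h : ℝ) ≠ 0 := by rw [hh]; positivity
  have hhI : (h : ℤ) = 2 ^ i * 3 ^ j := by rw [hh]; push_cast; rfl
  obtain ⟨s, a, b, c, d, hs, g00, g01, g10, g11⟩ := hg
  simp only [Nat.cast_one, mul_one] at hs g00 g11
  have hdet : a * d - b * (M * c) = 1 := by
    have := det_eq_one_entries g
    have g01' : g 0 1 = s * b / h := by rw [← g01]; field_simp
    rw [g00, g01', g10, g11] at this
    have e : (a * d - b * (M * c) : ℝ) = 1 := by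
      field_simp at this
      linear_combination this - (a * d - b * (M * c) : ℝ) * hs
    exact_mod_cast e
  obtain ⟨k₁, hk₁⟩ := exists_isCoprime_add_mul (a := a) (x := M * c)
    ⟨d, -b, by linear_combination hdet⟩ i j
  rw [← hhI] at hk₁
  set a' := a + k₁ * (M * c) with ha'
  set b' := b + k₁ * d with hb'
  have hdet' : a' * d - b' * (M * c) = 1 := by linear_combination hdet
  obtain ⟨k₂, b₁, hb₁⟩ := hk₁.exists_dvd_add_mul b'
  set d' := d + k₂ * (M * c) with hd'
  have hdh : IsCoprime d' (h : ℤ) := ⟨a', -b₁ * (M * c), by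
    linear_combination hdet' + (M * c) * hb₁⟩
  obtain ⟨k₃, c₁, hc₁⟩ := hdh.exists_dvd_add_mul c
  have hb₁' : (b + k₁ * d + k₂ * (a + k₁ * (M * c)) : ℝ) = h * b₁ := by
    have := hb₁; rw [hb', ha'] at this; exact_mod_cast this
  have hc₁' : (c + k₃ * (d + k₂ * (M * c)) : ℝ) = h * c₁ := by
    have := hc₁; rw [hd'] at this; exact_mod_cast this
  have hmem : upperUnipotent (k₁ / h) * g * upperUnipotent (k₂ / h) *
      lowerUnipotent (k₃ * (M * h)) ∈ H := by
    apply hΓ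
    have g01' : g 0 1 = s * b / h := by rw [← g01]; field_simp
    have hNR : (N : ℝ) = M * h ^ 2 := by exact_mod_cast hN
    refine ⟨s, a' + h * b₁ * k₃ * M, b₁, c₁, d', by simpa using hs, ?_, ?_, ?_, ?_⟩
    all_goals
      simp only [mul_entry, upperUnipotent_entry, lowerUnipotent_entry, g00, g01', g10, g11,
        ha', hd', hNR]
      push_cast
      field_simp
    · linear_combination (M * k₃ * s * h : ℝ) * hb₁'
    · linear_combination s * hb₁'
    · linear_combination (s * h ^ 2 * M) * hc₁'
    · ring
  rwa [H.mul_mem_cancel_right (hL' k₃), H.mul_mem_cancel_right (hU' k₂),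
    H.mul_mem_cancel_left (hU' k₁)] at hmem

lemma IsAtkinLehner.mem_lowerParams {N m n k : ℕ} (hm : 0 < m) (hN : N = m * n) (hk : k ^ 2 ∣ m)
    {H : Subgroup (Matrix.SpecialLinearGroup (Fin 2) ℝ)}
    (hΓ : ∀ x, IsScaledAtkinLehner N 1 1 x → x ∈ H)
    {w : Matrix.SpecialLinearGroup (Fin 2) ℝ} (hw : IsAtkinLehner N m w) (hwH : w ∈ H)
    (hU : (k : ℝ)⁻¹ ∈ upperParams H) : (N / k : ℝ) ∈ lowerParams H := by
  obtain ⟨s, a, b, c, d, hs, w00, w01, w10, w11⟩ := (isAtkinLehner_iff hm).mp hw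
  obtain ⟨l, rfl⟩ := hk
  have hk0 : (k : ℝ) ≠ 0 := by
    rintro h
    have : k = 0 := by exact_mod_cast h
    simp [this] at hm
  have hNR : (N : ℝ) = k ^ 2 * l * n := by rw [hN]; push_cast; ring
  have hdet : (k ^ 2 * l : ℤ) * a * d - b * c * n = 1 := by
    have := det_eq_one_entries w
    have h01 : w 0 1 = s * b := by simpa using w01
    rw [w00, h01, w10, w11, hNR] at this
    push_cast at this hs
    have e : (k ^ 2 * l : ℝ) * a * d - b * c * n = 1 := by
      linear_combination this - ((k ^ 2 * l : ℝ) * a * d - b * c * n) * hs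
    exact_mod_cast e
  have h1 : (n * c ^ 2 : ℤ) • (N / k : ℝ) ∈ lowerParams H := by
    have hX : w * upperUnipotent (k : ℝ)⁻¹ * w⁻¹ *
        lowerUnipotent ((n * c ^ 2 : ℤ) • (N / k : ℝ)) ∈ H := by
      apply hΓ
      have hs' : s ^ 2 * (k ^ 2 * l : ℝ) = 1 := by push_cast at hs; exact hs
      obtain ⟨X00, X01, X10, X11⟩ := conj_upperUnipotent_entry w (k : ℝ)⁻¹
      have Y00 : (k : ℝ)⁻¹ * (w 0 0 * w 1 0) = k * l * n * a * c := by
        rw [w00, w10, hNR]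
        push_cast
        field_simp
        linear_combination (a * c * n * l : ℝ) * hs'
      have Y01 : (k : ℝ)⁻¹ * w 0 0 ^ 2 = k * l * a ^ 2 := by
        rw [w00]
        push_cast
        field_simp
        linear_combination (a ^ 2 * l : ℝ) * hs'
      have Y10 : (k : ℝ)⁻¹ * w 1 0 ^ 2 = k * l * n * n * c ^ 2 := by
        rw [w10, hNR]
        push_cast
        field_simp
        linear_combination (c ^ 2 * n ^ 2 * l : ℝ) * hs'
      rw [Y00] at X00 X11
      rw [Y01] at X01
      rw [Y10] at X10
      refine ⟨1, 1 - k * l * n * a * c + n * c ^ 2 * k * l * n * k * l * a ^ 2, k * l * a ^ 2,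
        n * c ^ 2 * l * n * a * c, 1 + k * l * n * a * c, by simp, ?_, ?_, ?_, ?_⟩
      all_goals
        rw [mul_entry]
        simp only [X00, X01, X10, X11, lowerUnipotent_entry, hNR, zsmul_eq_mul]
        push_cast
        field_simp
        try ring
    refine (H.mul_mem_cancel_left ?_).mp hX
    exact H.mul_mem (H.mul_mem hwH hU) (H.inv_mem hwH)
  have h2 : (N : ℝ) ∈ lowerParams H := by
    apply hΓ
    refine ⟨1, 1, 0, 1, 1, ?_⟩
    simp [lowerUnipotent_entry]
  have hcop : IsCoprime (n * c ^ 2 : ℤ) k := by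
    refine IsCoprime.mul_left ?_ (IsCoprime.pow_left ?_)
    · exact ⟨-b * c, k * l * a * d, by linear_combination hdet⟩
    · exact ⟨-b * n, k * l * a * d, by linear_combination hdet⟩
  obtain ⟨x, y, hxy⟩ := hcop
  have h3 := (lowerParams H).add_mem ((lowerParams H).zsmul_mem h1 x)
    ((lowerParams H).zsmul_mem h2 y)
  convert h3 using 1
  have hxy' : (x * (n * c ^ 2) + y * k : ℝ) = 1 := by exact_mod_cast hxy
  simp only [zsmul_eq_mul]
  push_cast
  field_simp
  linear_combination -N * hxy'

lemma eq_zero_or_eq_factorization_of_coprime {p t r k M : ℕ} (hp : p.Prime) (hM : M ≠ 0)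
    (hr : ¬ p ∣ r) (hMk : M = p ^ t * r * k) (hco : Nat.Coprime (p ^ t * r) k) :
    t = 0 ∨ t = M.factorization p := by
  refine or_iff_not_imp_left.mpr fun ht => ?_
  have hpk : ¬ p ∣ k := fun h =>
    hp.one_lt.ne' (Nat.eq_one_of_dvd_coprimes hco ((dvd_pow_self p ht).mul_right r) h)
  subst hMk
  rw [mul_assoc, Nat.factorization_mul (by positivity [hp.pos])
      (right_ne_zero_of_mul (mul_assoc _ r k ▸ hM)),
    Finsupp.add_apply, hp.factorization_pow, Finsupp.single_eq_same,
    Nat.factorization_eq_zero_of_not_dvd (hp.dvd_mul.not.mpr (by tauto))]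
  rfl

lemma IsScaledAtkinLehner.exists_inv_mul {M h p t e : ℕ} (hh : 0 < h)
    {H : Subgroup (Matrix.SpecialLinearGroup (Fin 2) ℝ)}
    {w g : Matrix.SpecialLinearGroup (Fin 2) ℝ}
    (hg : IsScaledAtkinLehner M h (p ^ t * e) g) (hM : p ^ t * e ∣ M)
    (ht : t = 0 ∨ t = M.factorization p)
    (hw : IsScaledAtkinLehner M h (p ^ M.factorization p) w) (hwH : w ∈ H) :
    ∃ x ∈ H, IsScaledAtkinLehner M h e (x⁻¹ * g) := by
  rcases ht with rfl | rfl
  · exact ⟨1, H.one_mem, by simpa using hg⟩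
  · exact ⟨w, hwH, hw.inv_mul hg hM hh⟩

lemma exists_hall_ordProj {p i l M N : ℕ} (hp : p.Prime) (hM : M ≠ 0) (hl : ¬ p ∣ l)
    (hN : N = M * (p ^ i * l) ^ 2) :
    p ^ N.factorization p = (p ^ i) ^ 2 * p ^ M.factorization p ∧
    ∃ w : Matrix.SpecialLinearGroup (Fin 2) ℝ, IsAtkinLehner N (p ^ N.factorization p) w ∧
      IsScaledAtkinLehner M (p ^ i * l) (p ^ M.factorization p) w := by
  have hl0 : l ≠ 0 := by rintro rfl; simp at hl
  have hp0 := hp.pos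
  have hN0 : N ≠ 0 := by rw [hN]; positivity
  have key : p ^ N.factorization p = (p ^ i) ^ 2 * p ^ M.factorization p := by
    rw [← pow_mul, ← pow_add, hN, Nat.factorization_mul hM (by positivity),
      Nat.factorization_pow, Nat.factorization_mul (by positivity) hl0, hp.factorization_pow]
    simp [Nat.factorization_eq_zero_of_not_dvd hl]
    ring
  obtain ⟨w, hw⟩ := exists_isAtkinLehner (N := N) (m := p ^ N.factorization p) (by positivity)
    (Nat.ordProj_dvd N p) ((Nat.coprime_ordCompl hp hN0).pow_left _)
  exact ⟨key, w, hw, .of_isAtkinLehner hw hN key (dvd_mul_right _ _) (by positivity)⟩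

lemma IsScaledAtkinLehner.exists_atkinLehner_mul {M i j N e : ℕ} (hM : 0 < M)
    (hN : N = M * (2 ^ i * 3 ^ j) ^ 2) {H : Subgroup (Matrix.SpecialLinearGroup (Fin 2) ℝ)}
    (hU : ((2 ^ i * 3 ^ j : ℕ) : ℝ)⁻¹ ∈ upperParams H)
    (h2 : ∀ w, IsAtkinLehner N (2 ^ N.factorization 2) w → w ∈ H)
    (h3 : ∀ w, IsAtkinLehner N (3 ^ N.factorization 3) w → w ∈ H)
    (heM : e ∣ M) (hco : Nat.Coprime e (M / e))
    {g : Matrix.SpecialLinearGroup (Fin 2) ℝ} (hg : IsScaledAtkinLehner M (2 ^ i * 3 ^ j) e g) :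
    ∃ m : ℕ, m ∣ N ∧ Nat.gcd m (N / m) = 1 ∧ Nat.gcd m 6 = 1 ∧
      ∃ w, IsAtkinLehner N m w ∧ w⁻¹ * g ∈ H := by
  have hh0 : 0 < 2 ^ i * 3 ^ j := by positivity
  obtain ⟨k, hk⟩ := heM
  have he0 : e ≠ 0 := by rintro rfl; simp at hk; omega
  rw [hk, Nat.mul_div_cancel_left _ (Nat.pos_of_ne_zero he0)] at hco
  obtain ⟨key2, w2, hw2, hw2'⟩ := exists_hall_ordProj (p := 2) (i := i) (l := 3 ^ j)
    Nat.prime_two hM.ne' (fun h => absurd (Nat.prime_two.dvd_of_dvd_pow h) (by norm_num)) hN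
  obtain ⟨key3, w3, hw3, hw3'⟩ := exists_hall_ordProj (N := N) (p := 3) (i := j) (l := 2 ^ i)
    Nat.prime_three hM.ne' (fun h => absurd (Nat.prime_three.dvd_of_dvd_pow h) (by norm_num))
    (by rw [hN, mul_comm (3 ^ j)])
  rw [mul_comm (3 ^ j)] at hw3'
  have hΓ : ∀ x, IsScaledAtkinLehner N 1 1 x → x ∈ H := by
    intro x hx
    have hpos : 0 < 2 ^ N.factorization 2 := by positivity
    have : x⁻¹ * w2 ∈ H := h2 _ <| (isAtkinLehner_iff hpos).mpr <|
      hx.inv_mul (by rw [one_mul]; exact (isAtkinLehner_iff hpos).mp hw2)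
        (by rw [one_mul]; exact Nat.ordProj_dvd N 2) one_pos
    exact H.inv_mem_iff.mp ((H.mul_mem_cancel_right (h2 _ hw2)).mp this)
  have hU2 : ((2 ^ i : ℕ) : ℝ)⁻¹ ∈ upperParams H := by
    convert (upperParams H).nsmul_mem hU (3 ^ j) using 1
    simp [field]
  have hU3 : ((3 ^ j : ℕ) : ℝ)⁻¹ ∈ upperParams H := by
    convert (upperParams H).nsmul_mem hU (2 ^ i) using 1
    simp [field]
  have hL2 := hw2.mem_lowerParams (by positivity) (Nat.ordProj_mul_ordCompl_eq_self N 2).symm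
    (Dvd.intro _ key2.symm) hΓ (h2 _ hw2) hU2
  have hL3 := hw3.mem_lowerParams (by positivity) (Nat.ordProj_mul_ordCompl_eq_self N 3).symm
    (Dvd.intro _ key3.symm) hΓ (h3 _ hw3) hU3
  have hL : (M * (2 ^ i * 3 ^ j : ℕ) : ℝ) ∈ lowerParams H := by
    have : IsCoprime (2 ^ i : ℤ) (3 ^ j) := IsCoprime.pow (by norm_num)
    obtain ⟨x, y, hxy⟩ := this
    have hxy' : (x * 2 ^ i + y * 3 ^ j : ℝ) = 1 := by exact_mod_cast hxy
    convert (lowerParams H).add_mem ((lowerParams H).zsmul_mem hL3 x)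
      ((lowerParams H).zsmul_mem hL2 y) using 1
    rw [hN]
    simp only [zsmul_eq_mul]
    push_cast
    field_simp
    linear_combination (-1 : ℝ) * hxy'
  obtain ⟨t, e', he', rfl⟩ := Nat.exists_eq_pow_mul_and_not_dvd he0 2 (by norm_num)
  obtain ⟨r, m, hm, rfl⟩ := Nat.exists_eq_pow_mul_and_not_dvd (right_ne_zero_of_mul he0) 3
    (by norm_num)
  have ht := eq_zero_or_eq_factorization_of_coprime Nat.prime_two hM.ne' he' hk hco
  have hm2 : ¬ 2 ∣ m := fun h => he' (h.mul_left _)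
  have hr := eq_zero_or_eq_factorization_of_coprime (p := 3) (t := r) (r := 2 ^ t * m)
    Nat.prime_three hM.ne'
    (fun h => (Nat.prime_three.dvd_mul.mp h).elim
      (fun h => absurd (Nat.prime_three.dvd_of_dvd_pow h) (by norm_num)) hm)
    (k := k)
    (by rw [hk]; ring) (by rwa [show 3 ^ r * (2 ^ t * m) = 2 ^ t * (3 ^ r * m) by ring])
  have hm0 : 0 < m := Nat.pos_of_ne_zero (by rintro rfl; simp at hm)
  have c2 : Nat.Coprime m 2 := ((Nat.Prime.coprime_iff_not_dvd Nat.prime_two).mpr hm2).symm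
  have c3 : Nat.Coprime m 3 := ((Nat.Prime.coprime_iff_not_dvd Nat.prime_three).mpr hm).symm
  have cN : Nat.Coprime m (2 ^ t * 3 ^ r * k * (2 ^ i * 3 ^ j) ^ 2) := by
    have ck : Nat.Coprime m k := hco.coprime_dvd_left ⟨2 ^ t * 3 ^ r, by ring⟩
    exact (((c2.pow_right t).mul_right (c3.pow_right r)).mul_right ck).mul_right
      (((c2.pow_right i).mul_right (c3.pow_right j)).pow_right 2)
  have hmN : N = m * (2 ^ t * 3 ^ r * k * (2 ^ i * 3 ^ j) ^ 2) := by rw [hN, hk]; ring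
  have hco' : Nat.Coprime m (N / m) := by rwa [hmN, Nat.mul_div_cancel_left _ hm0]
  obtain ⟨w, hw⟩ := exists_isAtkinLehner hm0 (Dvd.intro _ hmN.symm) hco'
  refine ⟨m, Dvd.intro _ hmN.symm, hco', c2.mul_right c3, w, hw, ?_⟩
  have hw' : IsScaledAtkinLehner M (2 ^ i * 3 ^ j) m w :=
    .of_isAtkinLehner hw hN (k := 1) (by ring) (one_dvd _) hm0
  have g1 : IsScaledAtkinLehner M (2 ^ i * 3 ^ j) (2 ^ t * (3 ^ r * 1)) (w⁻¹ * g) :=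
    hw'.inv_mul (by rwa [show m * (2 ^ t * (3 ^ r * 1)) = 2 ^ t * (3 ^ r * m) by ring])
      ⟨k, by rw [hk]; ring⟩ hh0
  obtain ⟨x, hx, g2⟩ := g1.exists_inv_mul hh0 ⟨m * k, by rw [hk]; ring⟩ ht hw2' (h2 _ hw2)
  obtain ⟨y, hy, g3⟩ := g2.exists_inv_mul hh0 ⟨2 ^ t * m * k, by rw [hk]; ring⟩ hr hw3' (h3 _ hw3)
  have := g3.mem_of_unipotents rfl hN hΓ hU hL
  rwa [H.mul_mem_cancel_left (H.inv_mem hy), H.mul_mem_cancel_left (H.inv_mem hx)] at this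

/-- The subring `ℤ ⊆ ℝ`. -/
abbrev intSubring : Subring ℝ := (Int.castRingHom ℝ).range

lemma intCast_mem_intSubring (n : ℤ) : (n : ℝ) ∈ intSubring := ⟨n, rfl⟩

lemma SL2ZtoSL2R_entry (x : Matrix.SpecialLinearGroup (Fin 2) ℤ) (i j : Fin 2) :
    SL2ZtoSL2R x i j = (x i j : ℝ) := rfl

lemma entries_mem_of_mem_PMGamma0 {N : ℕ} {x : Matrix.SpecialLinearGroup (Fin 2) ℝ}
    (hx : x ∈ PMGamma0 N) :
    x 0 0 ∈ intSubring ∧ x 0 1 ∈ intSubring ∧ ∃ y ∈ intSubring, x 1 0 = N * y := by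
  have hle : PMGamma0 N ≤ (Gamma0 N).map SL2ZtoSL2R := by
    refine sup_le le_rfl ((Subgroup.zpowers_le).mpr ⟨-1, by simp [Gamma0_mem], ?_⟩)
    ext i j
    fin_cases i <;> fin_cases j <;> simp [SL2ZtoSL2R]
  obtain ⟨y, hy, rfl⟩ := hle hx
  obtain ⟨c, hc⟩ := (ZMod.intCast_zmod_eq_zero_iff_dvd _ _).mp (Gamma0_mem.mp hy)
  refine ⟨⟨y 0 0, rfl⟩, ⟨y 0 1, rfl⟩, c, intCast_mem_intSubring c, ?_⟩
  rw [SL2ZtoSL2R_entry, hc]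
  push_cast
  rfl

lemma conj_entries_mem {N : ℕ} {g : Matrix.SpecialLinearGroup (Fin 2) ℝ}
    (hg : g ∈ Subgroup.normalizer (PMGamma0 N)) (a b c d : ℤ) (h : a * d - b * (N * c) = 1) :
    a * (g 0 0 * g 1 1) - b * (g 0 0 * g 1 0) + N * c * (g 0 1 * g 1 1) - d * (g 0 1 * g 1 0)
      ∈ intSubring ∧
    -((a - d) * (g 0 0 * g 0 1)) + b * g 0 0 ^ 2 - N * c * g 0 1 ^ 2 ∈ intSubring ∧
    ∃ y ∈ intSubring,
      (a - d) * (g 1 0 * g 1 1) - b * g 1 0 ^ 2 + N * c * g 1 1 ^ 2 = N * y := by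
  let x : Matrix.SpecialLinearGroup (Fin 2) ℤ :=
    ⟨!![a, b; N * c, d], by rw [Matrix.det_fin_two_of]; exact h⟩
  have hx : SL2ZtoSL2R x ∈ PMGamma0 N :=
    Subgroup.mem_sup_left (Subgroup.mem_map_of_mem _
      (Gamma0_mem.mpr (by change ((N * c : ℤ) : ZMod N) = 0; simp)))
  have h4 := entries_mem_of_mem_PMGamma0 ((Subgroup.mem_normalizer_iff.mp hg _).mp hx)
  have e00 : SL2ZtoSL2R x 0 0 = a := rfl
  have e01 : SL2ZtoSL2R x 0 1 = b := rfl
  have e10 : SL2ZtoSL2R x 1 0 = ((N * c : ℤ) : ℝ) := rfl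
  have e11 : SL2ZtoSL2R x 1 1 = d := rfl
  push_cast at e10
  obtain ⟨i1, i2, i3, i4⟩ := inv_entry g
  simp only [mul_entry, i1, i2, i3, i4, e00, e01, e10, e11] at h4
  obtain ⟨h1, h2, y, hy, h3⟩ := h4
  exact ⟨by convert h1 using 1; ring, by convert h2 using 1; ring, y, hy, by rw [← h3]; ring⟩

/-- If `(a - d) * x` is an integer for all diagonals `a, d` of matrices in `Γ₀(N)`,
then so is `ε * x`, where `ε` is the gcd of all these `a - d`. -/
lemma gcd_mul_mem_intSubring {N ε : ℕ} (hN : 0 < N)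
    (hεgcd : ∀ e : ℕ, (∀ γ : Matrix.SpecialLinearGroup (Fin 2) ℤ, γ ∈ Gamma0 N →
      (e : ℤ) ∣ ((γ : Matrix (Fin 2) (Fin 2) ℤ) 0 0 - (γ : Matrix (Fin 2) (Fin 2) ℤ) 1 1)) →
      e ∣ ε) {x : ℝ}
    (hx : ∀ a b c d : ℤ, a * d - b * (N * c) = 1 → ((a - d : ℤ) : ℝ) * x ∈ intSubring) :
    (ε : ℝ) * x ∈ intSubring := by
  obtain ⟨k, hk⟩ := hx (1 + N) 1 1 1 (by ring)
  have hk : (k : ℝ) = N * x := by simpa using hk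
  have hN' : (N : ℤ) ≠ 0 := by exact_mod_cast hN.ne'
  have hNr : (N : ℝ) ≠ 0 := by exact_mod_cast hN.ne'
  obtain ⟨u, w, huw, hN2, hk2⟩ := Int.exists_gcd_one (m := N) (n := k)
    (Int.gcd_pos_of_ne_zero_left _ hN')
  have hG0 : ((Int.gcd N k : ℕ) : ℝ) ≠ 0 := by
    exact_mod_cast (Int.gcd_pos_of_ne_zero_left k hN').ne'
  have hxw : u * x = w := by
    apply mul_right_cancel₀ hG0
    have h1 : (N : ℝ) = u * (Int.gcd N k : ℕ) := by exact_mod_cast hN2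
    have h2 : (k : ℝ) = w * (Int.gcd N k : ℕ) := by exact_mod_cast hk2
    linear_combination h2 - hk - x * h1
  have hdvd : (u.natAbs : ℕ) ∣ ε := by
    refine hεgcd _ fun γ hγ => ?_
    obtain ⟨c, hc⟩ := (ZMod.intCast_zmod_eq_zero_iff_dvd _ _).mp (Gamma0_mem.mp hγ)
    have hdet := γ.det_coe
    rw [Matrix.det_fin_two, hc] at hdet
    obtain ⟨z, hz⟩ := hx _ _ _ _ hdet
    rw [Int.natAbs_dvd]
    refine (Int.isCoprime_iff_gcd_eq_one.mpr huw).dvd_of_dvd_mul_right (z := w) ⟨z, ?_⟩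
    have hz : (z : ℝ) = ((γ 0 0 - γ 1 1 : ℤ) : ℝ) * x := by simpa using hz
    have : ((γ 0 0 - γ 1 1 : ℤ) : ℝ) * w = u * z := by rw [hz, ← hxw]; ring
    exact_mod_cast this
  obtain ⟨y, hy⟩ := Int.natAbs_dvd.mp (Int.natCast_dvd_natCast.mpr hdvd)
  refine ⟨y * w, ?_⟩
  have : (ε : ℝ) = u * y := by exact_mod_cast hy
  rw [this]
  simp [← hxw]
  ring

/-- The integrality properties of the entries of an element normalizing `±Γ₀(N)`. -/
lemma integrality_of_mem_normalizer {N ε : ℕ} (hN : 0 < N)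
    (hεgcd : ∀ e : ℕ, (∀ γ : Matrix.SpecialLinearGroup (Fin 2) ℤ, γ ∈ Gamma0 N →
      (e : ℤ) ∣ ((γ : Matrix (Fin 2) (Fin 2) ℤ) 0 0 - (γ : Matrix (Fin 2) (Fin 2) ℤ) 1 1)) →
      e ∣ ε) {g : Matrix.SpecialLinearGroup (Fin 2) ℝ}
    (hg : g ∈ Subgroup.normalizer (PMGamma0 N)) :
    g 0 0 ^ 2 ∈ intSubring ∧ g 1 1 ^ 2 ∈ intSubring ∧ g 1 0 ^ 2 / N ∈ intSubring ∧
    N * g 0 1 ^ 2 ∈ intSubring ∧ ε * (g 0 1 * g 1 0) ∈ intSubring ∧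
    ε * (g 0 0 * g 0 1) ∈ intSubring ∧ ε * (g 1 0 * g 1 1 / N) ∈ intSubring := by
  have hNr : (N : ℝ) ≠ 0 := by exact_mod_cast hN.ne'
  have hdet := det_eq_one_entries g
  obtain ⟨T1, T2, y, hy, T3⟩ := conj_entries_mem hg 1 1 0 1 (by ring)
  obtain ⟨L1, L2, z, hz, L3⟩ := conj_entries_mem hg 1 0 1 1 (by ring)
  simp only [Int.cast_one, Int.cast_zero] at T1 T2 T3 L1 L2 L3
  have a2 : g 0 0 ^ 2 ∈ intSubring := by convert T2 using 1; ring
  have c2 : g 1 0 ^ 2 / N ∈ intSubring := by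
    convert neg_mem hy using 1; field_simp; linear_combination -T3
  have b2 : N * g 0 1 ^ 2 ∈ intSubring := by convert neg_mem L2 using 1; ring
  have d2 : g 1 1 ^ 2 ∈ intSubring := by
    convert hz using 1; apply mul_left_cancel₀ hNr; linear_combination L3
  have ac : g 0 0 * g 1 0 ∈ intSubring := by
    convert sub_mem (one_mem intSubring) T1 using 1; linear_combination hdet
  have bd : N * (g 0 1 * g 1 1) ∈ intSubring := by
    convert sub_mem L1 (one_mem intSubring) using 1; linear_combination -hdet
  have Z := intCast_mem_intSubring
  refine ⟨a2, d2, c2, b2, ?_, ?_, ?_⟩ <;>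
    refine gcd_mul_mem_intSubring hN hεgcd fun a b c d h => ?_
  all_goals obtain ⟨h1, h2, w, hw, h3⟩ := conj_entries_mem hg a b c d h
  · convert sub_mem (add_mem (sub_mem h1 (Z a)) (mul_mem (Z b) ac)) (mul_mem (Z c) bd) using 1
    push_cast
    linear_combination -a * hdet
  · convert sub_mem (sub_mem (mul_mem (Z b) a2) (mul_mem (Z c) b2)) h2 using 1
    push_cast
    ring
  · convert sub_mem (add_mem hw (mul_mem (Z b) c2)) (mul_mem (Z c) d2) using 1
    push_cast
    field_simp
    linear_combination h3

lemma mem_intSubring_of_squarefree {q : ℕ} (hq : Squarefree q) {k : ℤ} (hk : k ≠ 0) {u : ℝ}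
    (h1 : k * u ∈ intSubring) (h2 : q * u ^ 2 ∈ intSubring) : u ∈ intSubring := by
  obtain ⟨m, hm⟩ := h1
  obtain ⟨z, hz⟩ := h2
  obtain ⟨l, n, hln, hl, hn⟩ := Int.exists_gcd_one (n := m) (Int.gcd_pos_of_ne_zero_left m hk)
  have hG0 : ((Int.gcd k m : ℕ) : ℝ) ≠ 0 := by
    exact_mod_cast (Int.gcd_pos_of_ne_zero_left m hk).ne'
  have hlu : l * u = n := by
    apply mul_right_cancel₀ hG0
    have e1 : (k : ℝ) = l * (Int.gcd k m : ℕ) := by exact_mod_cast hl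
    have e2 : (m : ℝ) = n * (Int.gcd k m : ℕ) := by exact_mod_cast hn
    have e3 : (m : ℝ) = k * u := hm
    linear_combination e2 - e3 - u * e1
  have hz : (z : ℝ) = q * u ^ 2 := hz
  have hdvd : l * l ∣ q := by
    have hc : IsCoprime l n := Int.isCoprime_iff_gcd_eq_one.mpr hln
    refine ((hc.pow_right (n := 2)).mul_left hc.pow_right).dvd_of_dvd_mul_right (z := n ^ 2) ⟨z, ?_⟩
    have : (q : ℝ) * n ^ 2 = l * l * z := by rw [hz, ← hlu]; ring
    exact_mod_cast this
  rcases Int.isUnit_iff.mp ((Int.squarefree_natCast.mpr hq) l hdvd) with rfl | rfl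
  · exact ⟨n, by simp [← hlu]⟩
  · exact ⟨-n, by simp [← hlu]⟩

lemma mem_intSubring_of_coprime {σ q ε : ℕ} (hco : Nat.Coprime σ ε) (hq : Squarefree q)
    (hε : ε ≠ 0) {t : ℝ} (h1 : ε * t ∈ intSubring) (h2 : σ ^ 2 * q * t ^ 2 ∈ intSubring) :
    t ∈ intSubring := by
  have Z := intCast_mem_intSubring
  have h3 : σ * t ∈ intSubring :=
    mem_intSubring_of_squarefree hq (k := ε) (by exact_mod_cast hε)
      (by convert mul_mem (Z σ) h1 using 1; push_cast; ring)
      (by convert h2 using 1; ring)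
  obtain ⟨x, y, hxy⟩ := Nat.isCoprime_iff_coprime.mpr hco
  have hxy' : (x * σ + y * ε : ℝ) = 1 := by exact_mod_cast hxy
  convert add_mem (mul_mem (Z x) h3) (mul_mem (Z y) h1) using 1
  linear_combination -t * hxy'

lemma exists_primitive_of_ne_zero {k l m n : ℤ} (h : ¬(k = 0 ∧ l = 0 ∧ m = 0 ∧ n = 0)) :
    ∃ G A B C D x y z w : ℤ, k = G * A ∧ l = G * B ∧ m = G * C ∧ n = G * D ∧
      x * A + y * B + z * C + w * D = 1 := by
  obtain ⟨G, hG⟩ := (IsPrincipalIdealRing.principal (Ideal.span {k, l, m, n})).principal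
  have hmem : ∀ a ∈ ({k, l, m, n} : Set ℤ), G ∣ a := fun a ha =>
    Ideal.mem_span_singleton.mp (hG.le (Ideal.subset_span ha))
  obtain ⟨A, hA⟩ := hmem k (by simp)
  obtain ⟨B, hB⟩ := hmem l (by simp)
  obtain ⟨C, hC⟩ := hmem m (by simp)
  obtain ⟨D, hD⟩ := hmem n (by simp)
  have hGI : G ∈ Ideal.span {k, l, m, n} := hG.ge (Ideal.mem_span_singleton_self G)
  simp only [Ideal.mem_span_insert, Ideal.mem_span_singleton'] at hGI
  obtain ⟨x, _, ⟨y, _, ⟨z, _, ⟨w, rfl⟩, rfl⟩, rfl⟩, hsum⟩ := hGI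
  have hG0 : G ≠ 0 := by
    rintro rfl
    simp only [zero_mul] at hA hB hC hD
    exact h ⟨hA, hB, hC, hD⟩
  refine ⟨G, A, B, C, D, x, y, z, w, hA, hB, hC, hD, mul_left_cancel₀ hG0 ?_⟩
  linear_combination -hsum - x * hA - y * hB - z * hC - w * hD

lemma exists_atkinLehner_shape {A B C D M e x y z w : ℤ}
    (hprim : x * A + y * B + z * C + w * D = 1) (hdet : A * D - B * C = e) (he : e ≠ 0)
    (hM : M ≠ 0) (hAA : e ∣ A * A) (hAB : e ∣ A * B) (hAC : e * M ∣ A * C) (hAD : e ∣ A * D)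
    (hBB : e ∣ M * B ^ 2) (hBD : e ∣ B * D) (hCC : e * M ∣ C * C) (hCD : e * M ∣ C * D)
    (hDD : e ∣ D * D) :
    ∃ a c d k, A = e * a ∧ C = M * c ∧ D = e * d ∧ M = e * k ∧ IsCoprime e k := by
  have hBC : e ∣ B * C := by
    rw [show B * C = A * D - e by rw [← hdet]; ring]
    exact dvd_sub hAD dvd_rfl
  have key : ∀ X, e ∣ X * A → e ∣ X * B → e ∣ X * C → e ∣ X * D → e ∣ X := by
    intro X h1 h2 h3 h4
    rw [show X = x * (X * A) + y * (X * B) + z * (X * C) + w * (X * D) by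
      linear_combination -X * hprim]
    exact dvd_add (dvd_add (dvd_add (h1.mul_left _) (h2.mul_left _)) (h3.mul_left _))
      (h4.mul_left _)
  obtain ⟨a, rfl⟩ := key A hAA hAB (dvd_of_mul_right_dvd hAC) hAD
  obtain ⟨d, rfl⟩ := key D (mul_comm D _ ▸ hAD) (mul_comm D _ ▸ hBD)
    (mul_comm D _ ▸ dvd_of_mul_right_dvd hCD) hDD
  obtain ⟨c', rfl⟩ := key C (mul_comm C _ ▸ dvd_of_mul_right_dvd hAC) (mul_comm C _ ▸ hBC)
    (dvd_of_mul_right_dvd hCC) (dvd_of_mul_right_dvd hCD)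
  have h1 : e * a * d - B * c' = 1 := mul_left_cancel₀ he (by linear_combination hdet)
  have hcB : IsCoprime e B := ⟨a * d, -c', by linear_combination h1⟩
  obtain ⟨k, rfl⟩ := (hcB.pow_right (n := 2)).dvd_of_dvd_mul_right hBB
  obtain ⟨u, hu⟩ := hAC
  obtain ⟨v, hv⟩ := hCC
  have hu' : a * c' = k * u := mul_left_cancel₀ (mul_ne_zero he he) (by linear_combination hu)
  have hv' : c' * c' = k * v := mul_left_cancel₀ (mul_ne_zero he he) (by linear_combination hv)
  have hc' : c' = k * (e * d * u - B * v) := by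
    linear_combination -c' * h1 + e * d * hu' - B * hv'
  refine ⟨a, e * d * u - B * v, d, k, rfl, ?_, rfl, rfl, a * d, -B * (e * d * u - B * v), ?_⟩
  · linear_combination e * hc'
  · linear_combination h1 + B * hc'

lemma exists_isScaledAtkinLehner_of_integrality {M h : ℕ} (hM : 0 < M) (hh : 0 < h)
    {g : Matrix.SpecialLinearGroup (Fin 2) ℝ} {b c : ℝ} (hb : b = h * g 0 1)
    (hc : g 1 0 = h * c) (haa : g 0 0 * g 0 0 ∈ intSubring) (hab : g 0 0 * b ∈ intSubring)
    (hac : g 0 0 * c / M ∈ intSubring) (had : g 0 0 * g 1 1 ∈ intSubring)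
    (hbb : M * b ^ 2 ∈ intSubring) (hbd : b * g 1 1 ∈ intSubring)
    (hcc : c * c / M ∈ intSubring) (hcd : c * g 1 1 / M ∈ intSubring)
    (hdd : g 1 1 * g 1 1 ∈ intSubring) :
    ∃ e : ℕ, e ∣ M ∧ Nat.Coprime e (M / e) ∧ IsScaledAtkinLehner M h e g := by
  have hMr : (M : ℝ) ≠ 0 := by exact_mod_cast hM.ne'
  have hhr : (h : ℝ) ≠ 0 := by exact_mod_cast hh.ne'
  have hdet : g 0 0 * g 1 1 - b * c = 1 := by
    rw [hb]; linear_combination det_eq_one_entries g + g 0 1 * hc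
  have ofdiv : ∀ {t : ℝ}, t / M ∈ intSubring → t ∈ intSubring := fun {t} ht => by
    convert mul_mem (intCast_mem_intSubring M) ht using 1
    push_cast
    field_simp
  obtain ⟨x, hx0, ⟨n1, h1⟩, ⟨n2, h2⟩, ⟨n3, h3⟩, n4, h4⟩ : ∃ x : ℝ, x ≠ 0 ∧
      x * g 0 0 ∈ intSubring ∧ x * b ∈ intSubring ∧ x * c ∈ intSubring ∧
      x * g 1 1 ∈ intSubring := by
    by_cases hα : g 0 0 = 0
    · have hbc : b * c = -1 := by rw [hα] at hdet; linear_combination -hdet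
      exact ⟨c, by rintro rfl; simp at hbc, mul_comm (g 0 0) c ▸ ofdiv hac,
        by rw [mul_comm, hbc]; exact neg_mem (one_mem _), ofdiv hcc, ofdiv hcd⟩
    · exact ⟨g 0 0, hα, haa, hab, ofdiv hac, had⟩
  simp only [Int.coe_castRingHom] at h1 h2 h3 h4
  obtain ⟨G, A, B, C, D, p, q, r, t, rfl, rfl, rfl, rfl, hprim⟩ :=
    exists_primitive_of_ne_zero (k := n1) (l := n2) (m := n3) (n := n4) (by
      rintro ⟨rfl, rfl, rfl, rfl⟩
      simp only [Int.cast_zero, zero_eq_mul, hx0, false_or] at h1 h2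
      simp [h1, h2] at hdet)
  push_cast at h1 h2 h3 h4
  obtain ⟨s, hs⟩ : ∃ s : ℝ, (G : ℝ) = x * s := ⟨G / x, by field_simp⟩
  have scale : ∀ {X y : ℝ}, G * X = x * y → y = s * X := fun {X y} hy =>
    mul_left_cancel₀ hx0 (by rw [← hy, hs]; ring)
  replace h1 := scale h1
  replace h2 := scale h2
  replace h3 := scale h3
  replace h4 := scale h4
  have hse : s ^ 2 * ((A * D - B * C : ℤ) : ℝ) = 1 := by
    push_cast
    rw [← hdet, h1, h2, h3, h4]
    ring
  have he : 0 < A * D - B * C := by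
    have : (0 : ℝ) < ((A * D - B * C : ℤ) : ℝ) :=
      pos_of_mul_pos_right (hse ▸ one_pos) (sq_nonneg s)
    exact_mod_cast this
  obtain ⟨e, he'⟩ := Int.eq_ofNat_of_zero_le he.le
  rw [he', Int.cast_natCast] at hse
  rw [he'] at he
  have div1 : ∀ {P : ℤ}, s ^ 2 * P ∈ intSubring → (e : ℤ) ∣ P := by
    rintro P ⟨z, hz⟩
    have hz : (z : ℝ) = s ^ 2 * P := hz
    refine ⟨z, ?_⟩
    have : (P : ℝ) = e * z := by linear_combination (-P : ℝ) * hse - e * hz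
    exact_mod_cast this
  have divM : ∀ {P : ℤ}, s ^ 2 * P / M ∈ intSubring → (e * M : ℤ) ∣ P := by
    rintro P ⟨z, hz⟩
    have hz : (z : ℝ) = s ^ 2 * P / M := hz
    refine ⟨z, ?_⟩
    have : (P : ℝ) = e * M * z := by
      rw [hz]; field_simp; linear_combination (-P : ℝ) * hse
    exact_mod_cast this
  rw [h1] at haa hab hac had
  rw [h2] at hab hbb hbd
  rw [h3] at hac hcc hcd
  rw [h4] at had hbd hcd hdd
  obtain ⟨a', c', d', k, rfl, rfl, rfl, hk, hek⟩ := exists_atkinLehner_shape hprim he' he.ne'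
    (M := M) (by exact_mod_cast hM.ne')
    (div1 (by convert haa using 1; push_cast; ring))
    (div1 (by convert hab using 1; push_cast; ring))
    (divM (by convert hac using 1; push_cast; ring))
    (div1 (by convert had using 1; push_cast; ring))
    (div1 (by convert hbb using 1; push_cast; ring))
    (div1 (by convert hbd using 1; push_cast; ring))
    (divM (by convert hcc using 1; push_cast; ring))
    (divM (by convert hcd using 1; push_cast; ring))
    (div1 (by convert hdd using 1; push_cast; ring))
  have heM : e ∣ M := Int.natCast_dvd_natCast.mp ⟨k, hk⟩
  have hkM : k = ((M / e : ℕ) : ℤ) := by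
    rw [Int.natCast_div, hk, Int.mul_ediv_cancel_left _ he.ne']
  refine ⟨e, heM, Nat.isCoprime_iff_coprime.mp (hkM ▸ hek), s, a', B, c', d', hse, ?_, ?_, ?_, ?_⟩
  · rw [h1]; push_cast; ring
  · rw [← hb, h2]
  · rw [hc, h3]; push_cast; ring
  · rw [h4]; push_cast; ring

lemma exists_isScaledAtkinLehner_of_mem_normalizer {N σ q ε : ℕ} (hN : 0 < N)
    (hqsf : Squarefree q) (hNσq : N = σ ^ 2 * q)
    (hε : ∀ γ : Matrix.SpecialLinearGroup (Fin 2) ℤ, γ ∈ Gamma0 N →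
      (ε : ℤ) ∣ ((γ : Matrix (Fin 2) (Fin 2) ℤ) 0 0 - (γ : Matrix (Fin 2) (Fin 2) ℤ) 1 1))
    (hεgcd : ∀ e : ℕ, (∀ γ : Matrix.SpecialLinearGroup (Fin 2) ℤ, γ ∈ Gamma0 N →
      (e : ℤ) ∣ ((γ : Matrix (Fin 2) (Fin 2) ℤ) 0 0 - (γ : Matrix (Fin 2) (Fin 2) ℤ) 1 1)) →
      e ∣ ε) {g : Matrix.SpecialLinearGroup (Fin 2) ℝ}
    (hg : g ∈ Subgroup.normalizer (PMGamma0 N)) :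
    ∃ M e : ℕ, N = M * (Nat.gcd σ ε) ^ 2 ∧ e ∣ M ∧ Nat.Coprime e (M / e) ∧
      IsScaledAtkinLehner M (Nat.gcd σ ε) e g := by
  have hε0 : ε ≠ 0 := by
    rintro rfl
    have := hε ⟨!![1 + N, 1; N, 1], by rw [Matrix.det_fin_two_of]; ring⟩
      (Gamma0_mem.mpr (by simp))
    simp at this
    omega
  have hσ0 : σ ≠ 0 := by rintro rfl; simp at hNσq; omega
  have hh : 0 < Nat.gcd σ ε := Nat.gcd_pos_of_pos_left _ (Nat.pos_of_ne_zero hσ0)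
  obtain ⟨σ', ε', hco, hσ', hε'⟩ := Nat.exists_coprime σ ε
  generalize Nat.gcd σ ε = h at *
  have hε'0 : ε' ≠ 0 := by rintro rfl; simp at hε'; omega
  have hNM : N = σ' ^ 2 * q * h ^ 2 := by rw [hNσq, hσ']; ring
  have hM : 0 < σ' ^ 2 * q := Nat.pos_of_ne_zero (by rintro h0; simp [h0] at hNM; omega)
  obtain ⟨a2, d2, c2, b2, bc, ab, cd⟩ := integrality_of_mem_normalizer hN hεgcd hg
  obtain ⟨-, -, -, -, -, bd, ac⟩ := integrality_of_mem_normalizer hN hεgcd (inv_mem hg)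
  obtain ⟨i1, i2, i3, i4⟩ := inv_entry g
  rw [i1, i2] at bd
  rw [i3, i4] at ac
  have hdet := det_eq_one_entries g
  have hMr : ((σ' ^ 2 * q : ℕ) : ℝ) ≠ 0 := by exact_mod_cast hM.ne'
  have hhr : (h : ℝ) ≠ 0 := by exact_mod_cast hh.ne'
  have hNr : (N : ℝ) = (σ' ^ 2 * q : ℕ) * h ^ 2 := by exact_mod_cast hNM
  have hεr : (ε : ℝ) = ε' * h := by exact_mod_cast hε'
  rw [hNr] at c2 b2 cd ac
  have hL : ∀ {t : ℝ}, ε' * t ∈ intSubring → (σ' ^ 2 * q : ℕ) * t ^ 2 ∈ intSubring →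
      t ∈ intSubring := fun {t} h1 h2 =>
    mem_intSubring_of_coprime hco hqsf hε'0 h1 (by exact_mod_cast h2)
  have had : g 0 0 * g 1 1 ∈ intSubring := by
    refine mem_intSubring_of_coprime (Nat.coprime_one_left ε) squarefree_one hε0 ?_ ?_
    · convert add_mem bc (intCast_mem_intSubring ε) using 1
      push_cast
      linear_combination (ε : ℝ) * hdet
    · convert mul_mem a2 d2 using 1
      push_cast
      ring
  rw [hεr] at ab cd bd ac
  push_cast at hMr c2 b2 cd ac hL
  obtain ⟨e, h1, h2, h3⟩ := exists_isScaledAtkinLehner_of_integrality (M := σ' ^ 2 * q) (h := h)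
    (g := g) (b := h * g 0 1) (c := g 1 0 / h) hM hh rfl (by field_simp)
    (by convert a2 using 1; ring)
    (hL (by convert ab using 1; ring) (by convert mul_mem a2 b2 using 1; ring))
    (hL (by convert neg_mem ac using 1; push_cast; field_simp)
      (by convert mul_mem a2 c2 using 1; push_cast; field_simp))
    had (by convert b2 using 1; push_cast; ring)
    (hL (by convert neg_mem bd using 1; ring) (by convert mul_mem d2 b2 using 1; ring))
    (by convert c2 using 1; push_cast; field_simp)
    (hL (by convert cd using 1; push_cast; field_simp)
      (by convert mul_mem d2 c2 using 1; push_cast; field_simp))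
    (by convert d2 using 1; ring)
  exact ⟨_, e, hNM, h1, h2, h3⟩

/-- Only the primes `2` and `3` can divide all the differences `a - d` over `Γ₀(N)`. -/
lemma prime_eq_two_or_three {N ε p : ℕ} (hN : 0 < N) (hp : p.Prime) (hpN : p ∣ N) (hpε : p ∣ ε)
    (hε : ∀ γ : Matrix.SpecialLinearGroup (Fin 2) ℤ, γ ∈ Gamma0 N →
      (ε : ℤ) ∣ ((γ : Matrix (Fin 2) (Fin 2) ℤ) 0 0 - (γ : Matrix (Fin 2) (Fin 2) ℤ) 1 1)) :
    p = 2 ∨ p = 3 := by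
  by_contra! hne
  have : NeZero N := ⟨hN.ne'⟩
  have : Fact p.Prime := ⟨hp⟩
  have h2 : (2 : ZMod p) ≠ 0 := fun h => hne.1 <|
    (Nat.prime_dvd_prime_iff_eq hp Nat.prime_two).mp ((ZMod.natCast_eq_zero_iff 2 p).mp h)
  have h3 : (3 : ZMod p) ≠ 0 := fun h => hne.2 <|
    (Nat.prime_dvd_prime_iff_eq hp Nat.prime_three).mp ((ZMod.natCast_eq_zero_iff 3 p).mp h)
  obtain ⟨u, hu⟩ := ZMod.unitsMap_surjective hpN (Units.mk0 2 h2)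
  obtain ⟨a, ha⟩ := ZMod.intCast_surjective (u : ZMod N)
  obtain ⟨d, hd⟩ := ZMod.intCast_surjective ((u⁻¹ : (ZMod N)ˣ) : ZMod N)
  obtain ⟨b, hb⟩ : (N : ℤ) ∣ a * d - 1 := by
    rw [← ZMod.intCast_zmod_eq_zero_iff_dvd]
    push_cast
    rw [ha, hd, Units.mul_inv, sub_self]
  have hdiv := hε ⟨!![a, b; N, d], by rw [Matrix.det_fin_two_of]; linear_combination hb⟩
    (Gamma0_mem.mpr (by simp))
  have had : (a - d : ZMod p) = 0 := by
    have := (ZMod.intCast_zmod_eq_zero_iff_dvd _ p).mpr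
      ((Int.natCast_dvd_natCast.mpr hpε).trans hdiv)
    simpa using this
  have hap : (a : ZMod p) = 2 := by
    have := congrArg Units.val hu
    rw [ZMod.unitsMap_val, ← ha, ZMod.cast_intCast hpN] at this
    exact this
  have hN0 : (N : ZMod p) = 0 := (ZMod.natCast_eq_zero_iff N p).mpr hpN
  have hb' : (a * d - 1 : ZMod p) = N * b := by exact_mod_cast congrArg (Int.cast : ℤ → ZMod p) hb
  apply h3
  linear_combination hb' + b * hN0 + a * had - (a + 2) * hap

lemma exists_eq_two_pow_mul_three_pow {n : ℕ} (hn : n ≠ 0)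
    (h : ∀ p : ℕ, p.Prime → p ∣ n → p = 2 ∨ p = 3) : ∃ i j, n = 2 ^ i * 3 ^ j := by
  obtain ⟨i, n', h2, rfl⟩ := Nat.exists_eq_pow_mul_and_not_dvd hn 2 (by norm_num)
  obtain ⟨j, m, h3, rfl⟩ := Nat.exists_eq_pow_mul_and_not_dvd (right_ne_zero_of_mul hn) 3
    (by norm_num)
  refine ⟨i, j, ?_⟩
  have : m = 1 := by
    by_contra hm
    obtain ⟨p, hp, hpm⟩ := Nat.exists_prime_and_dvd hm
    rcases h p hp ((hpm.mul_left _).mul_left _) with rfl | rfl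
    · exact h2 (hpm.mul_left _)
    · exact h3 hpm
  rw [this, mul_one]

/-- **Theorem of Atkin–Lehner, Akbas–Singerman, Bars.** With `N = σ² q`, `q` squarefree,
`ε` the gcd of all `a - d` over `Γ₀(N)` and `v(N) = gcd(σ, ε)`: every `g ∈ SL(2, ℝ)`
normalizing `±Γ₀(N)` can be written as `g = ±γ · w_m · Ω` with `γ ∈ Γ₀(N)`, `w_m` an
Atkin–Lehner matrix for a Hall divisor `m` of `N` coprime to `6`, and `Ω` in the subgroup
generated by `S_{v(N)} = !![1, 1/v(N); 0, 1]` and Atkin–Lehner matrices for the Hall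
divisors `2^{v₂(N)}` and `3^{v₃(N)}` of `N`. -/
theorem normalizer_Gamma0_structure
    (N : ℕ) (hN : 0 < N) (σ q : ℕ) (hσ : 0 < σ) (hq : 0 < q) (hqsf : Squarefree q)
    (hNσq : N = σ ^ 2 * q)
    (ε : ℕ)
    (hε : ∀ γ : Matrix.SpecialLinearGroup (Fin 2) ℤ, γ ∈ Gamma0 N →
      (ε : ℤ) ∣ ((γ : Matrix (Fin 2) (Fin 2) ℤ) 0 0 - (γ : Matrix (Fin 2) (Fin 2) ℤ) 1 1))
    (hεgcd : ∀ e : ℕ, (∀ γ : Matrix.SpecialLinearGroup (Fin 2) ℤ, γ ∈ Gamma0 N →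
      (e : ℤ) ∣ ((γ : Matrix (Fin 2) (Fin 2) ℤ) 0 0 - (γ : Matrix (Fin 2) (Fin 2) ℤ) 1 1)) →
      e ∣ ε)
    (v : ℕ) (hv : v = Nat.gcd σ ε)
    (g : Matrix.SpecialLinearGroup (Fin 2) ℝ)
    (hg : g ∈ Subgroup.normalizer (PMGamma0 N)) :
    ∃ m : ℕ, m ∣ N ∧ Nat.gcd m (N / m) = 1 ∧ Nat.gcd m 6 = 1 ∧
      ∃ wm : Matrix.SpecialLinearGroup (Fin 2) ℝ, IsAtkinLehner N m wm ∧
        ∃ Ω ∈ Subgroup.closure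
          ({S : Matrix.SpecialLinearGroup (Fin 2) ℝ |
              (S : Matrix (Fin 2) (Fin 2) ℝ) = !![1, ((v : ℝ))⁻¹; 0, 1]} ∪
            {w | IsAtkinLehner N (2 ^ N.factorization 2) w} ∪
            {w | IsAtkinLehner N (3 ^ N.factorization 3) w}),
          ∃ γ : Matrix.SpecialLinearGroup (Fin 2) ℤ, γ ∈ Gamma0 N ∧
            (g = SL2ZtoSL2R γ * wm * Ω ∨ g = -(SL2ZtoSL2R γ * wm * Ω)) := by
  obtain ⟨M, e, hNM, heM, hco, hgS⟩ :=
    exists_isScaledAtkinLehner_of_mem_normalizer hN hqsf hNσq hε hεgcd hg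
  rw [← hv] at hNM hgS
  have hv0 : v ≠ 0 := by rw [hv]; exact (Nat.gcd_pos_of_pos_left _ hσ).ne'
  have hM : 0 < M := Nat.pos_of_ne_zero (by rintro rfl; simp at hNM; omega)
  obtain ⟨i, j, hij⟩ := exists_eq_two_pow_mul_three_pow hv0 fun p hp hpv =>
    prime_eq_two_or_three hN hp
      (((hpv.trans (hv ▸ Nat.gcd_dvd_left σ ε)).trans (dvd_pow_self σ two_ne_zero)).trans
        (hNσq ▸ dvd_mul_right _ _)) (hpv.trans (hv ▸ Nat.gcd_dvd_right σ ε)) hε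
  rw [hij] at hNM hgS
  obtain ⟨m, hmN, hm, hm6, w, hw, hwg⟩ := hgS.exists_atkinLehner_mul hM hNM
    (H := Subgroup.closure
      ({S : Matrix.SpecialLinearGroup (Fin 2) ℝ |
          (S : Matrix (Fin 2) (Fin 2) ℝ) = !![1, ((v : ℝ))⁻¹; 0, 1]} ∪
        {w | IsAtkinLehner N (2 ^ N.factorization 2) w} ∪
        {w | IsAtkinLehner N (3 ^ N.factorization 3) w}))
    (Subgroup.subset_closure (Or.inl (Or.inl (by rw [hij]; rfl))))
    (fun w hw => Subgroup.subset_closure (Or.inl (Or.inr hw)))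
    (fun w hw => Subgroup.subset_closure (Or.inr hw)) heM hco
  exact ⟨m, hmN, hm, hm6, w, hw, w⁻¹ * g, hwg, 1, one_mem _, Or.inl (by simp)⟩
end

section
/- Let N be a positive integer with N ≠ 4. A matrix g ∈ SL(2,ℝ) normalizes the subgroup ±Γ₁(N) of SL(2,ℝ) if and only if there exist a Hall divisor Q of N (i.e. Q ∣ N with gcd(Q, N/Q) = 1) and integers x, y, z, w with Q·x·w − (N/Q)·y·z = 1 such that g or −g equals (1/√Q)·[[Qx, y],[Nz, Qw]]. -/
open Matrix CongruenceSubgroup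

/-- The subgroup `±Γ₁(N)` of `SL(2, ℝ)`, generated by the image of `Γ₁(N)` and `-1`. -/
def PMGamma1 (N : ℕ) : Subgroup (Matrix.SpecialLinearGroup (Fin 2) ℝ) :=
  (Gamma1 N).map SL2ZtoSL2R ⊔ Subgroup.zpowers (-1)

/-- The entries of the image of an integral matrix in `SL(2, ℝ)`. -/
@[simp]
lemma SL2ZtoSL2R_apply (γ : Matrix.SpecialLinearGroup (Fin 2) ℤ) (i j : Fin 2) :
    (SL2ZtoSL2R γ).1 i j = γ.1 i j :=
  rfl

/-- Membership in `±Γ₁(N)` expressed through matrix entries. -/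
lemma mem_PMGamma1_iff (N : ℕ) (h : Matrix.SpecialLinearGroup (Fin 2) ℝ) :
    h ∈ PMGamma1 N ↔ ∃ a b c d ε : ℤ, (ε = 1 ∨ ε = -1) ∧
      h.1 0 0 = ε * (1 + N * a) ∧ h.1 0 1 = ε * b ∧
      h.1 1 0 = ε * (N * c) ∧ h.1 1 1 = ε * (1 + N * d) := by
  constructor
  · intro hh
    have key : ∃ γ ∈ Gamma1 N, h = SL2ZtoSL2R γ ∨ h = -SL2ZtoSL2R γ := by
      have hn : (Subgroup.zpowers (-1 : Matrix.SpecialLinearGroup (Fin 2) ℝ)).Normal := by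
        refine ⟨fun n hn k => ?_⟩
        obtain ⟨m, rfl⟩ := hn
        have hc : Commute k ((-1) ^ m) := (Commute.neg_one_right k).zpow_right m
        exact ⟨m, by simp [hc.eq]⟩
      obtain ⟨u, ⟨γ, hγ, rfl⟩, v, ⟨n, rfl⟩, rfl⟩ := Subgroup.mem_sup_of_normal_right.1 hh
      refine ⟨γ, hγ, ?_⟩
      rcases Int.even_or_odd n with hn | hn
      · left; simp [hn.neg_one_zpow]
      · right; simp [hn.neg_one_zpow]
    obtain ⟨γ, hγ, hhγ⟩ := key
    obtain ⟨h0, h1, h2⟩ := (Gamma1_mem N γ).1 hγ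
    obtain ⟨a, ha⟩ : (N : ℤ) ∣ γ 0 0 - 1 := by
      rw [← ZMod.intCast_zmod_eq_zero_iff_dvd]; push_cast; rw [h0]; simp
    obtain ⟨d, hd⟩ : (N : ℤ) ∣ γ 1 1 - 1 := by
      rw [← ZMod.intCast_zmod_eq_zero_iff_dvd]; push_cast; rw [h1]; simp
    obtain ⟨c, hc⟩ : (N : ℤ) ∣ γ 1 0 := by
      rw [← ZMod.intCast_zmod_eq_zero_iff_dvd]; exact h2
    have e0 : ((γ 0 0 : ℤ) : ℝ) = 1 + N * a := by
      rw [show γ 0 0 = 1 + N * a by linarith]; push_cast; ring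
    have e1 : ((γ 1 1 : ℤ) : ℝ) = 1 + N * d := by
      rw [show γ 1 1 = 1 + N * d by linarith]; push_cast; ring
    have e2 : ((γ 1 0 : ℤ) : ℝ) = N * c := by
      rw [hc]; push_cast; ring
    rcases hhγ with rfl | rfl
    · refine ⟨a, γ 0 1, c, d, 1, Or.inl rfl, ?_⟩
      simp [← e0, ← e1, ← e2]
    · refine ⟨a, γ 0 1, c, d, -1, Or.inr rfl, ?_⟩
      simp only [← e0, ← e1, ← e2]
      simp
  · rintro ⟨a, b, c, d, ε, hε, h00, h01, h10, h11⟩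
    have hdet := h.2
    rw [Matrix.det_fin_two, h00, h01, h10, h11] at hdet
    have hε2 : ε * ε = 1 := by rcases hε with rfl | rfl <;> rfl
    have hdet' : (1 + N * a) * (1 + N * d) - b * (N * c) = (1 : ℤ) := by
      have : (ε * (1 + N * a)) * (ε * (1 + N * d)) - ε * b * (ε * (N * c)) = (1 : ℤ) := by
        exact_mod_cast hdet
      linear_combination this - ((1 + N * a) * (1 + N * d) - b * (N * c)) * hε2
    let γ : Matrix.SpecialLinearGroup (Fin 2) ℤ :=
      ⟨!![1 + N * a, b; N * c, 1 + N * d], by rw [Matrix.det_fin_two_of]; exact hdet'⟩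
    have hγ : γ ∈ Gamma1 N := by
      rw [Gamma1_mem]
      simp [γ]
    have hmem : SL2ZtoSL2R γ ∈ PMGamma1 N :=
      Subgroup.mem_sup_left (Subgroup.mem_map_of_mem _ hγ)
    have hneg : (-1 : Matrix.SpecialLinearGroup (Fin 2) ℝ) ∈ PMGamma1 N :=
      Subgroup.mem_sup_right (Subgroup.mem_zpowers _)
    rcases hε with rfl | rfl
    · have e : h = SL2ZtoSL2R γ := by
        ext i j
        rw [SL2ZtoSL2R_apply]
        fin_cases i <;> fin_cases j <;> simp [γ, h00, h01, h10, h11]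
      exact e ▸ hmem
    · have e : h = -1 * SL2ZtoSL2R γ := by
        ext i j
        rw [neg_one_mul, Matrix.SpecialLinearGroup.coe_neg, Matrix.neg_apply, SL2ZtoSL2R_apply]
        fin_cases i <;> fin_cases j <;> simp [γ, h00, h01, h10, h11]
      exact e ▸ mul_mem hneg hmem

/-- The entries of a conjugate in `SL(2, ℝ)`. -/
lemma conj_apply_SL2R (g h : Matrix.SpecialLinearGroup (Fin 2) ℝ) :
    (g * h * g⁻¹).1 = !![
      (g.1 0 0 * h.1 0 0 + g.1 0 1 * h.1 1 0) * g.1 1 1 -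
        (g.1 0 0 * h.1 0 1 + g.1 0 1 * h.1 1 1) * g.1 1 0,
      -(g.1 0 0 * h.1 0 0 + g.1 0 1 * h.1 1 0) * g.1 0 1 +
        (g.1 0 0 * h.1 0 1 + g.1 0 1 * h.1 1 1) * g.1 0 0;
      (g.1 1 0 * h.1 0 0 + g.1 1 1 * h.1 1 0) * g.1 1 1 -
        (g.1 1 0 * h.1 0 1 + g.1 1 1 * h.1 1 1) * g.1 1 0,
      -(g.1 1 0 * h.1 0 0 + g.1 1 1 * h.1 1 0) * g.1 0 1 +
        (g.1 1 0 * h.1 0 1 + g.1 1 1 * h.1 1 1) * g.1 0 0] := by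
  rw [Matrix.SpecialLinearGroup.coe_mul, Matrix.SpecialLinearGroup.coe_mul,
    Matrix.SpecialLinearGroup.coe_inv, Matrix.adjugate_fin_two]
  ext i j
  fin_cases i <;> fin_cases j <;> simp [Matrix.mul_apply, Fin.sum_univ_two] <;> ring

/-- A matrix of Atkin–Lehner type conjugates `±Γ₁(N)` into itself. -/
lemma conj_mem_PMGamma1 {N Q Q' : ℕ} (hQ : N = Q * Q') {x y z w : ℤ}
    (hdet : Q * x * w - Q' * y * z = 1) {t : ℝ} (ht : t * t * Q = 1)
    {g : Matrix.SpecialLinearGroup (Fin 2) ℝ}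
    (hg : g.1 = t • !![(Q : ℝ) * x, (y : ℝ); (N : ℝ) * z, (Q : ℝ) * w])
    {h : Matrix.SpecialLinearGroup (Fin 2) ℝ} (hh : h ∈ PMGamma1 N) :
    g * h * g⁻¹ ∈ PMGamma1 N := by
  obtain ⟨a, b, c, d, ε, hε, h00, h01, h10, h11⟩ := (mem_PMGamma1_iff N h).1 hh
  have hN : (N : ℝ) = Q * Q' := by exact_mod_cast hQ
  have hdet' : (Q : ℝ) * x * w - Q' * y * z = 1 := by exact_mod_cast hdet
  rw [mem_PMGamma1_iff]
  refine ⟨a * Q * x * w + c * y * w - b * x * z - d * Q' * y * z,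
    x * y * N * (d - a) - Q' * c * y ^ 2 + Q * x ^ 2 * b,
    z * w * N * (a - d) + Q * c * w ^ 2 - Q' * z ^ 2 * b,
    d * Q * x * w - c * y * w + b * x * z - a * Q' * y * z, ε, hε, ?_⟩
  rw [conj_apply_SL2R, hg, h00, h01, h10, h11]
  simp only [Matrix.smul_apply, Matrix.of_apply, Matrix.cons_val', Matrix.cons_val_zero,
    Matrix.cons_val_one, Matrix.cons_val_fin_one, smul_eq_mul]
  push_cast
  rw [hN]
  refine ⟨?_, ?_, ?_, ?_⟩
  · linear_combination (ε : ℝ) * (Q * x * w * (1 + Q * Q' * a) + y * c * w * (Q * Q')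
      - Q * x * b * z * Q' - y * z * Q' * (1 + Q * Q' * d)) * ht + (ε : ℝ) * hdet'
  · linear_combination (ε : ℝ) * (-(x * y * (1 + Q * Q' * a)) - y ^ 2 * Q' * c
      + Q * x ^ 2 * b + x * y * (1 + Q * Q' * d)) * ht
  · linear_combination (ε : ℝ) * (Q * Q') * (z * w * (1 + Q * Q' * a) + Q * c * w ^ 2
      - Q' * z ^ 2 * b - w * z * (1 + Q * Q' * d)) * ht
  · linear_combination (ε : ℝ) * (-(Q' * z * y * (1 + Q * Q' * a)) - w * (Q * Q') * c * y
      + Q * Q' * z * b * x + Q * w * x * (1 + Q * Q' * d)) * ht + (ε : ℝ) * hdet'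

/-- If `A * B = N * k ^ 2` with `A`, `B` coprime, then `N` splits accordingly and the
cofactors are squares. -/
lemma exists_sq_factors_of_coprime {N : ℕ} (hN : 0 < N) {A B k : ℤ} (hA : 0 ≤ A) (hB : 0 ≤ B)
    (hAB : IsCoprime A B) (h : A * B = N * k ^ 2) :
    ∃ Q Q' : ℕ, N = Q * Q' ∧ ∃ x z : ℤ, A = Q * x ^ 2 ∧ B = Q' * z ^ 2 := by
  lift A to ℕ using hA
  lift B to ℕ using hB
  have hco : Nat.Coprime A B := Nat.isCoprime_iff_coprime.1 hAB
  have hn : A * B = N * k.natAbs ^ 2 := by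
    zify; rw [sq_abs]; exact h
  have hNQ : N = Nat.gcd N A * Nat.gcd N B := by
    rw [← hco.gcd_mul, hn]; simp
  refine ⟨_, _, hNQ, ?_⟩
  obtain ⟨A', hA'⟩ := Nat.gcd_dvd_right N A
  obtain ⟨B', hB'⟩ := Nat.gcd_dvd_right N B
  have hco' : IsCoprime (A' : ℤ) (B' : ℤ) := by
    rw [Nat.isCoprime_iff_coprime]
    exact hco.of_dvd (Dvd.intro_left _ hA'.symm) (Dvd.intro_left _ hB'.symm)
  have hm : (A' : ℤ) * B' = k ^ 2 := by
    have : N * (A' * B') = N * k.natAbs ^ 2 := by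
      calc N * (A' * B') = Nat.gcd N A * A' * (Nat.gcd N B * B') := by
            conv_lhs => rw [hNQ]
            ring
        _ = _ := by rw [← hA', ← hB', hn]
    have := Nat.eq_of_mul_eq_mul_left hN this
    zify at this
    rwa [sq_abs] at this
  have sq_of {u v : ℕ} (huv : IsCoprime (u : ℤ) (v : ℤ)) (e : (u : ℤ) * v = k ^ 2) :
      ∃ x : ℤ, (u : ℤ) = x ^ 2 := by
    obtain ⟨x, hx | hx⟩ := Int.sq_of_isCoprime huv e
    · exact ⟨x, hx⟩
    · exact ⟨0, by nlinarith [sq_nonneg x]⟩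
  obtain ⟨x, hx⟩ := sq_of hco' hm
  obtain ⟨z, hz⟩ := sq_of hco'.symm (by rw [mul_comm]; exact hm)
  refine ⟨x, z, ?_, ?_⟩
  · rw [← hx]; exact_mod_cast hA'
  · rw [← hz]; exact_mod_cast hB'

/-- A real number whose square is an integer and which has a nonzero integer multiple that is an
integer is itself an integer. -/
lemma exists_int_of_sq_of_mul {N : ℕ} (hN : 0 < N) {u : ℝ} {m n : ℤ} (h2 : u ^ 2 = m)
    (h1 : N * u = n) : ∃ k : ℤ, u = k := by
  have hN' : (N : ℝ) ≠ 0 := by positivity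
  have e : n ^ 2 = (N : ℤ) ^ 2 * m := by
    have : (n : ℝ) ^ 2 = N ^ 2 * m := by rw [← h1, ← h2]; ring
    exact_mod_cast this
  obtain ⟨k, hk⟩ := (Int.pow_dvd_pow_iff two_ne_zero).1 (Dvd.intro _ e.symm)
  refine ⟨k, mul_left_cancel₀ hN' ?_⟩
  rw [h1, hk]; push_cast; ring

/-- A real number whose square is that of `t * x` is an integer multiple of `t`. -/
lemma exists_int_eq_mul_of_sq {u t : ℝ} {x : ℤ} (h : u ^ 2 = (t * x) ^ 2) :
    ∃ x' : ℤ, u = t * x' := by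
  rcases sq_eq_sq_iff_eq_or_eq_neg.1 h with h | h
  · exact ⟨x, h⟩
  · exact ⟨-x, by rw [h]; push_cast; ring⟩

/-- If `1 + v` and `1 - v` are both `1` modulo `N` up to a common sign and `N ≠ 4`, then `v` is
an integer divisible by `N`. -/
lemma exists_int_mul_of_trace_two {N : ℕ} (hN : 0 < N) (hN4 : N ≠ 4) {v : ℝ} {a d ε : ℤ}
    (hε : ε = 1 ∨ ε = -1) (ha : 1 + v = ε * (1 + N * a)) (hd : 1 - v = ε * (1 + N * d)) :
    ∃ k : ℤ, v = N * k := by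
  rcases hε with rfl | rfl
  · exact ⟨a, by push_cast at ha; linear_combination ha⟩
  · have htr : (N : ℤ) * (-a - d) = 4 := by
      have : (N : ℝ) * (-a - d) = 4 := by
        push_cast at ha hd
        linear_combination -ha - hd
      exact_mod_cast this
    have hdvd : N ∣ 4 := by exact_mod_cast Dvd.intro _ htr
    have hN2 : N ∣ 2 := by
      have := Nat.le_of_dvd (by norm_num) hdvd
      interval_cases N <;> simp_all
    obtain ⟨e, he⟩ := hN2
    have he' : (2 : ℝ) = N * e := by exact_mod_cast he
    exact ⟨-a - e, by push_cast at ha ⊢; linear_combination ha - he'⟩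

/-- Arithmetic constraints on the entries of an element normalizing `±Γ₁(N)`. -/
lemma entries_of_mem_normalizer {N : ℕ} (hN : 0 < N) (hN4 : N ≠ 4)
    {g : Matrix.SpecialLinearGroup (Fin 2) ℝ} (hg : g ∈ Subgroup.normalizer (PMGamma1 N)) :
    ∃ A B C D k l m : ℤ, g.1 0 0 ^ 2 = A ∧ g.1 1 0 ^ 2 = N * B ∧ g.1 1 1 ^ 2 = C ∧
      N * g.1 0 1 ^ 2 = D ∧ g.1 0 0 * g.1 1 0 = N * k ∧ g.1 0 1 * g.1 1 1 = l ∧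
      g.1 0 0 * g.1 1 1 = m := by
  have hdet := g.2
  rw [Matrix.det_fin_two] at hdet
  let T : Matrix.SpecialLinearGroup (Fin 2) ℝ := ⟨!![1, 1; 0, 1], by simp⟩
  let U : Matrix.SpecialLinearGroup (Fin 2) ℝ := ⟨!![1, 0; (N : ℝ), 1], by simp⟩
  have hT : T ∈ PMGamma1 N :=
    (mem_PMGamma1_iff N T).2 ⟨0, 1, 0, 0, 1, Or.inl rfl, by simp [T]⟩
  have hU : U ∈ PMGamma1 N :=
    (mem_PMGamma1_iff N U).2 ⟨0, 0, 1, 0, 1, Or.inl rfl, by simp [U]⟩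
  let V : Matrix.SpecialLinearGroup (Fin 2) ℝ := ⟨!![1 + (N : ℝ), 1; (N : ℝ), 1], by simp⟩
  have hV : V ∈ PMGamma1 N :=
    (mem_PMGamma1_iff N V).2 ⟨1, 1, 1, 0, 1, Or.inl rfl, by simp [V]⟩
  obtain ⟨a, b, c, d, ε, hε, h00, h01, h10, h11⟩ := (mem_PMGamma1_iff N _).1
    ((Subgroup.mem_normalizer_iff.1 hg T).1 hT)
  obtain ⟨a', b', c', d', ε', hε', h00', h01', h10', h11'⟩ := (mem_PMGamma1_iff N _).1
    ((Subgroup.mem_normalizer_iff.1 hg U).1 hU)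
  obtain ⟨a₂, b₂, c₂, d₂, ε₂, hε₂, h00₂, h01₂, h10₂, h11₂⟩ := (mem_PMGamma1_iff N _).1
    ((Subgroup.mem_normalizer_iff.1 hg V).1 hV)
  rw [conj_apply_SL2R] at h00 h01 h10 h11 h00' h01' h10' h11' h00₂ h01₂ h10₂ h11₂
  simp only [T, U, V, Matrix.of_apply, Matrix.cons_val', Matrix.cons_val_zero,
    Matrix.cons_val_one, Matrix.cons_val_fin_one]
    at h00 h01 h10 h11 h00' h01' h10' h11' h00₂ h01₂ h10₂ h11₂
  generalize g.1 0 0 = p at *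
  generalize g.1 0 1 = q at *
  generalize g.1 1 0 = r at *
  generalize g.1 1 1 = s at *
  have hN0 : (N : ℝ) ≠ 0 := by positivity
  obtain ⟨k, hk⟩ : ∃ k : ℤ, -(p * r) = N * k :=
    exists_int_mul_of_trace_two hN hN4 hε (a := a) (d := d)
      (by linear_combination h00 - hdet) (by linear_combination h11 - hdet)
  obtain ⟨l, hl⟩ : ∃ l : ℤ, N * (q * s) = N * l :=
    exists_int_mul_of_trace_two hN hN4 hε' (a := a') (d := d')
      (by linear_combination h00' - hdet) (by linear_combination h11' - hdet)
  obtain ⟨m, hm⟩ : ∃ m : ℤ, p * s = m := by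
    have h1 : (N : ℝ) * (p * s) = (ε₂ * (1 + N * a₂) - ε' * (1 + N * a') - ε * (1 + N * a) + 1
        : ℤ) := by
      push_cast
      linear_combination h00₂ - h00' - h00 + hdet
    have h2 : (p * s) ^ 2 = ((ε * b) * (ε' * c') : ℤ) := by
      push_cast
      have : s ^ 2 = ε' * c' := mul_left_cancel₀ hN0 (by linear_combination h10')
      rw [← this]
      linear_combination s ^ 2 * h01
    exact exists_int_of_sq_of_mul hN h2 h1
  refine ⟨ε * b, -(ε * c), ε' * c', -(ε' * b'), -k, l, m, ?_, ?_, ?_, ?_, ?_,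
    mul_left_cancel₀ hN0 hl, hm⟩
  · push_cast; linear_combination h01
  · push_cast; linear_combination -h10
  · push_cast; exact mul_left_cancel₀ hN0 (by linear_combination h10')
  · push_cast; linear_combination -h01'
  · push_cast; linear_combination -hk

/-- **Theorem of Kim–Koo and Lang.** For `N ≠ 4`, a matrix `g ∈ SL(2, ℝ)` normalizes
`±Γ₁(N)` if and only if `±g = (1/√Q)·!![Qx, y; Nz, Qw]` for some Hall divisor `Q` of `N`
and integers `x, y, z, w` with `Qxw - (N/Q)yz = 1`. -/
theorem kim_koo_lang_normalizer_Gamma1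
    (N : ℕ) (hN : 0 < N) (hN4 : N ≠ 4)
    (g : Matrix.SpecialLinearGroup (Fin 2) ℝ) :
    g ∈ Subgroup.normalizer (PMGamma1 N) ↔
      ∃ Q : ℕ, Q ∣ N ∧ Nat.gcd Q (N / Q) = 1 ∧
        ∃ x y z w : ℤ, (Q : ℤ) * x * w - ((N : ℤ) / (Q : ℤ)) * y * z = 1 ∧
          ((g : Matrix (Fin 2) (Fin 2) ℝ) =
              (Real.sqrt Q)⁻¹ •
                !![(Q : ℝ) * (x : ℝ), (y : ℝ); (N : ℝ) * (z : ℝ), (Q : ℝ) * (w : ℝ)] ∨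
            (g : Matrix (Fin 2) (Fin 2) ℝ) =
              -((Real.sqrt Q)⁻¹ •
                !![(Q : ℝ) * (x : ℝ), (y : ℝ); (N : ℝ) * (z : ℝ), (Q : ℝ) * (w : ℝ)])) := by
  constructor
  · intro hg
    obtain ⟨A, B, C, D, k, l, m, hA, hB, hC, hD, hk, hl, hm⟩ :=
      entries_of_mem_normalizer hN hN4 hg
    have hdet := g.2
    rw [Matrix.det_fin_two] at hdet
    have hg' : g.1 = !![g.1 0 0, g.1 0 1; g.1 1 0, g.1 1 1] := Matrix.eta_fin_two _
    rw [hg']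
    generalize g.1 0 0 = p at *
    generalize g.1 0 1 = q at *
    generalize g.1 1 0 = r at *
    generalize g.1 1 1 = s at *
    have hNpos : (0 : ℝ) < N := by exact_mod_cast hN
    have hN0 : (N : ℝ) ≠ 0 := hNpos.ne'
    have hA0 : 0 ≤ A := by have := hA ▸ sq_nonneg p; exact_mod_cast this
    have hC0 : 0 ≤ C := by have := hC ▸ sq_nonneg s; exact_mod_cast this
    have hB0 : 0 ≤ B := by
      have : (0 : ℝ) ≤ B := nonneg_of_mul_nonneg_right (hB ▸ sq_nonneg r) hNpos
      exact_mod_cast this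
    have hD0 : 0 ≤ D := by
      have : (0 : ℝ) ≤ D := hD ▸ (by positivity)
      exact_mod_cast this
    have hAC : m ^ 2 = A * C := by
      have : (m : ℝ) ^ 2 = A * C := by rw [← hm, ← hA, ← hC]; ring
      exact_mod_cast this
    have hBD : (m - 1) ^ 2 = B * D := by
      have : ((m : ℝ) - 1) ^ 2 = B * D := by
        rw [← hm, ← hD, show p * s - 1 = q * r by linear_combination hdet]
        linear_combination q ^ 2 * hB
      exact_mod_cast this
    have hAB : A * B = N * k ^ 2 := by
      have : (A : ℝ) * B = N * k ^ 2 := mul_left_cancel₀ hN0 (by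
        rw [← hA]
        linear_combination -p ^ 2 * hB + (p * r + N * k) * hk)
      exact_mod_cast this
    have hCD : C * D = N * l ^ 2 := by
      have : (C : ℝ) * D = N * l ^ 2 := by rw [← hC, ← hD, ← hl]; ring
      exact_mod_cast this
    have hco : IsCoprime (A * C) (B * D) := by
      rw [← hAC, ← hBD]
      exact IsCoprime.pow ⟨1, -1, by ring⟩
    have hcoAB : IsCoprime A B := hco.of_mul_left_left.of_mul_right_left
    have hcoAD : IsCoprime A D := hco.of_mul_left_left.of_mul_right_right
    have hcoCB : IsCoprime C B := hco.of_mul_left_right.of_mul_right_left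
    have hcoCD : IsCoprime C D := hco.of_mul_left_right.of_mul_right_right
    obtain ⟨Q, Q', hQ, x, z, rfl, rfl⟩ := exists_sq_factors_of_coprime hN hA0 hB0 hcoAB hAB
    obtain ⟨R, R', hR, w, y, rfl, rfl⟩ := exists_sq_factors_of_coprime hN hC0 hD0 hcoCD hCD
    have hQQ' : Nat.Coprime Q Q' :=
      Nat.isCoprime_iff_coprime.1 hcoAB.of_mul_left_left.of_mul_right_left
    have hQR' : Nat.Coprime Q R' :=
      Nat.isCoprime_iff_coprime.1 hcoAD.of_mul_left_left.of_mul_right_left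
    have hRQ' : Nat.Coprime R Q' :=
      Nat.isCoprime_iff_coprime.1 hcoCB.of_mul_left_left.of_mul_right_left
    have hQpos : 0 < Q := Nat.pos_of_ne_zero (by rintro rfl; simp at hQ; omega)
    obtain rfl : Q = R := Nat.dvd_antisymm
      (hQR'.dvd_of_dvd_mul_right (hR ▸ Dvd.intro _ hQ.symm))
      (hRQ'.dvd_of_dvd_mul_right (hQ ▸ Dvd.intro _ hR.symm))
    obtain rfl : Q' = R' := Nat.eq_of_mul_eq_mul_left hQpos (hQ.symm.trans hR)
    clear hAC hBD hAB hCD hco hcoAB hcoAD hcoCB hcoCD hA0 hB0 hC0 hD0 hg'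
    have hQ0 : (Q : ℝ) ≠ 0 := by positivity
    have hNQ : (N : ℝ) = Q * Q' := by exact_mod_cast hQ
    have ht : (√(Q : ℝ))⁻¹ * (√(Q : ℝ))⁻¹ * Q = 1 := by
      rw [← mul_inv, Real.mul_self_sqrt (by positivity), inv_mul_cancel₀ hQ0]
    generalize hts : (√(Q : ℝ))⁻¹ = t at *
    push_cast at hA hB hC hD
    obtain ⟨x, rfl⟩ : ∃ x' : ℤ, p = t * Q * x' := exists_int_eq_mul_of_sq (x := x) (by
      linear_combination hA - Q * x ^ 2 * ht)
    obtain ⟨w, rfl⟩ : ∃ x' : ℤ, s = t * Q * x' := exists_int_eq_mul_of_sq (x := w) (by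
      linear_combination hC - Q * w ^ 2 * ht)
    obtain ⟨z, rfl⟩ : ∃ x' : ℤ, r = t * N * x' := exists_int_eq_mul_of_sq (x := z) (by
      rw [hNQ] at hB ⊢
      linear_combination hB - Q * Q' ^ 2 * z ^ 2 * ht)
    obtain ⟨y, rfl⟩ : ∃ x' : ℤ, q = t * x' := exists_int_eq_mul_of_sq (x := y) (by
      refine mul_left_cancel₀ hN0 ?_
      rw [hNQ] at hD ⊢
      linear_combination hD - Q' * y ^ 2 * ht)
    have hdiv : N / Q = Q' := by rw [hQ, Nat.mul_div_cancel_left _ hQpos]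
    refine ⟨Q, Dvd.intro _ hQ.symm, by rwa [hdiv], x, y, z, w, ?_, Or.inl ?_⟩
    · rw [← Int.natCast_div, hdiv]
      have : (Q : ℝ) * x * w - Q' * y * z = 1 := by
        rw [hNQ] at hdet
        linear_combination hdet - (Q * x * w - Q' * y * z) * ht
      exact_mod_cast this
    · ext i j
      fin_cases i <;> fin_cases j <;> simp [hts, mul_assoc]
  · rintro ⟨Q, ⟨Q', hQ⟩, -, x, y, z, w, hdet, hg⟩
    have hQpos : 0 < Q := Nat.pos_of_ne_zero (by rintro rfl; simp at hQ; omega)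
    have hdiv : N / Q = Q' := by rw [hQ, Nat.mul_div_cancel_left _ hQpos]
    rw [← Int.natCast_div, hdiv] at hdet
    have hQ0 : (Q : ℝ) ≠ 0 := by positivity
    obtain ⟨t, ht, hg⟩ : ∃ t : ℝ, t * t * Q = 1 ∧
        g.1 = t • !![(Q : ℝ) * x, (y : ℝ); (N : ℝ) * z, (Q : ℝ) * w] := by
      have ht : (√(Q : ℝ))⁻¹ * (√(Q : ℝ))⁻¹ * Q = 1 := by
        rw [← mul_inv, Real.mul_self_sqrt (by positivity), inv_mul_cancel₀ hQ0]
      rcases hg with hg | hg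
      · exact ⟨_, ht, hg⟩
      · exact ⟨-(√(Q : ℝ))⁻¹, by rw [neg_mul_neg, ht], by rw [hg, neg_smul]⟩
    have hginv : (g⁻¹).1 =
        t • !![(Q : ℝ) * w, ((-y : ℤ) : ℝ); (N : ℝ) * (-z : ℤ), (Q : ℝ) * x] := by
      rw [Matrix.SpecialLinearGroup.coe_inv, hg, Matrix.adjugate_fin_two]
      ext i j
      fin_cases i <;> fin_cases j <;> simp
    rw [Subgroup.mem_normalizer_iff]
    refine fun h => ⟨conj_mem_PMGamma1 hQ hdet ht hg, fun hh => ?_⟩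
    have := conj_mem_PMGamma1 hQ (by linear_combination hdet) ht hginv hh
    simpa [mul_assoc] using this
end
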